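/- arXiv:math/0601249 — 5 statements merged into one kernel-verified Lean document; each statement's English description precedes it below -/
import Mathlib

section
/- Let a_1, …, a_r be positive integers, m = Σ_{i=1}^{r}(a_i − 1) + 1 and p = max{a_1, …, a_r}. If p ≥ 3 and m ≥ p + 2, then F(a_1, …, a_r; m−1) ≤ m + 3p. -/
/-- `G → (a_1, …, a_r)`: for every `r`-coloring of the vertices of `G` there is some
color `i` whose color class contains a clique of `G` on `a i` vertices. -/
def VArrows {V : Type*} (G : SimpleGraph V) {r : ℕ} (a : Fin r → ℕ) : Prop :=
  ∀ C : V → Fin r, ∃ i : Fin r, ∃ s : Finset V, G.IsNClique (a i) s ∧ ∀ v ∈ s, C v = i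

/-- The vertex Folkman number `F(a_1, …, a_r; q)`: the minimum number of vertices of a
graph `G` with `G → (a_1, …, a_r)` and `cl(G) < q`. -/
noncomputable def vertexFolkman {r : ℕ} (a : Fin r → ℕ) (q : ℕ) : ℕ :=
  sInf {n : ℕ | ∃ G : SimpleGraph (Fin n), VArrows G a ∧ G.cliqueNum < q}

lemma zmod_off {p : ℕ} (d e : ℕ) (hd : d ≤ 2 * p) (he : e ≤ 2 * p)
    (h : (d : ZMod (2 * p + 1)) = (e : ZMod (2 * p + 1))) : d = e := by
  rw [ZMod.natCast_eq_natCast_iff'] at h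
  rwa [Nat.mod_eq_of_lt (by omega), Nat.mod_eq_of_lt (by omega)] at h

lemma zmod_top (p : ℕ) : (2 * p + 1 : ZMod (2 * p + 1)) = 0 := by
  have := ZMod.natCast_self (2 * p + 1)
  push_cast at this
  exact this

lemma zmod_succ {p : ℕ} (d e : ℕ) (hd : d ≤ 2 * p) (he : e ≤ 2 * p)
    (h : (d : ZMod (2 * p + 1)) = (e : ZMod (2 * p + 1)) + 1) :
    d = e + 1 ∨ (d = 0 ∧ e = 2 * p) := by
  rcases Nat.lt_or_ge e (2 * p) with h1 | h1
  · left
    exact zmod_off d (e + 1) hd (by omega) (by push_cast; exact h)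
  · right
    have he' : e = 2 * p := by omega
    subst he'
    refine ⟨zmod_off d 0 hd (by omega) ?_, rfl⟩
    rw [h]
    push_cast
    exact zmod_top p

/-- Adjacency in the complement of the cycle. -/
def cAdj (p : ℕ) (x y : ZMod (2 * p + 1)) : Prop := x ≠ y ∧ x ≠ y + 1 ∧ y ≠ x + 1

/-- The extremal graph. -/
def bigG (p k : ℕ) : SimpleGraph ((ZMod (2 * p + 1) ⊕ ZMod (2 * p + 1)) ⊕ Fin k) where
  Adj u v := match u, v with
    | .inl (.inl x), .inl (.inl y) => cAdj p x y
    | .inl (.inl x), .inl (.inr i) => x ≠ i ∧ x ≠ i + 1 ∧ x ≠ i + 4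
    | .inl (.inr i), .inl (.inl x) => x ≠ i ∧ x ≠ i + 1 ∧ x ≠ i + 4
    | .inl (.inr _), .inl (.inr _) => False
    | .inl _, .inr _ => True
    | .inr _, .inl _ => True
    | .inr a, .inr b => a ≠ b
  symm := ⟨by
    rintro ((x | x) | x) ((y | y) | y) h <;> simp_all [cAdj]
    exact fun h' => h.1 h'.symm
    exact fun h' => h h'.symm⟩
  loopless := ⟨by
    rintro ((x | x) | x) h <;> simp_all [cAdj]⟩

lemma indep_le {p : ℕ} (hp : 1 ≤ p) (I : Finset (ZMod (2 * p + 1)))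
    (hI : ∀ x ∈ I, x + 1 ∉ I) : I.card ≤ p := by
  rcases I.eq_empty_or_nonempty with rfl | ⟨x, hx⟩
  · simp
  have key : ∀ y ∈ I, ∃ d : ℕ, d = (y - x).val ∧ d ≤ 2 * p ∧ y = x + (d : ZMod (2 * p + 1)) := by
    intro y hy
    refine ⟨(y - x).val, rfl, ?_, ?_⟩
    · have := ZMod.val_lt (y - x); omega
    · rw [ZMod.natCast_zmod_val]; ring
  calc I.card ≤ (Finset.range p).card := by
        apply Finset.card_le_card_of_injOn (fun y => (y - x).val / 2)
        · intro y hy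
          obtain ⟨d, hd, hd2, hd3⟩ := key y hy
          simp only [← hd, Finset.coe_range, Set.mem_Iio]
          have : d ≠ 2 * p := by
            rintro h
            apply hI y hy
            rw [hd3, h]
            have := zmod_top p
            push_cast
            rw [add_assoc, this, add_zero]
            exact hx
          omega
        · intro y hy z hz hyz
          obtain ⟨d, hd, hd2, hd3⟩ := key y hy
          obtain ⟨e, he, he2, he3⟩ := key z hz
          simp only [← hd, ← he] at hyz
          have h3 : d = e ∨ d = e + 1 ∨ e = d + 1 := by omega
          rcases h3 with h | h | h
          · rw [hd3, he3, h]
          · exfalso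
            apply hI z hz
            have : z + 1 = y := by rw [hd3, he3, h]; push_cast; ring
            rwa [this]
          · exfalso
            apply hI y hy
            have : y + 1 = z := by rw [hd3, he3, h]; push_cast; ring
            rwa [this]
    _ = p := by simp

lemma indep_le' {p : ℕ} (hp : 3 ≤ p) (I : Finset (ZMod (2 * p + 1)))
    (hI : ∀ x ∈ I, x + 1 ∉ I) (x : ZMod (2 * p + 1)) (h0 : x ∉ I) (h1 : x + 1 ∉ I)
    (h4 : x + 4 ∉ I) : I.card ≤ p - 1 := by
  have key : ∀ y ∈ I, ∃ d : ℕ, d = (y - x).val ∧ d ≤ 2 * p ∧ y = x + (d : ZMod (2 * p + 1)) ∧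
      d ≠ 0 ∧ d ≠ 1 ∧ d ≠ 4 := by
    intro y hy
    have e : y = x + (((y - x).val : ℕ) : ZMod (2 * p + 1)) := by
      rw [ZMod.natCast_zmod_val]; ring
    refine ⟨(y - x).val, rfl, ?_, e, ?_, ?_, ?_⟩
    · have := ZMod.val_lt (y - x); omega
    · intro h; rw [h] at e; apply h0; simpa [e] using hy
    · intro h; rw [h] at e; apply h1; simpa [e] using hy
    · intro h; rw [h] at e; apply h4; simpa [e] using hy
  calc I.card ≤ (Finset.Icc 2 p).card := by
        apply Finset.card_le_card_of_injOn
          (fun y => if (y - x).val < 4 then 2 else ((y - x).val + 1) / 2)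
        · intro y hy
          obtain ⟨d, hd, hd2, hd3, hd4, hd5, hd6⟩ := key y hy
          simp only [← hd, Finset.coe_Icc, Set.mem_Icc]
          split_ifs <;> omega
        · intro y hy z hz hyz
          obtain ⟨d, hd, hd2, hd3, hd4, hd5, hd6⟩ := key y hy
          obtain ⟨e, he, he2, he3, he4, he5, he6⟩ := key z hz
          simp only [← hd, ← he] at hyz
          have h3 : d = e ∨ d = e + 1 ∨ e = d + 1 := by
            split_ifs at hyz <;> omega
          rcases h3 with h | h | h
          · rw [hd3, he3, h]
          · exfalso
            apply hI z hz
            have : z + 1 = y := by rw [hd3, he3, h]; push_cast; ring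
            rwa [this]
          · exfalso
            apply hI y hy
            have : y + 1 = z := by rw [hd3, he3, h]; push_cast; ring
            rwa [this]
    _ = p - 1 := by simp

lemma bigG_clique {p k : ℕ} (hp : 3 ≤ p)
    (s : Finset ((ZMod (2 * p + 1) ⊕ ZMod (2 * p + 1)) ⊕ Fin k))
    (hs : (bigG p k).IsClique (s : Set _)) : s.card ≤ p + k := by
  classical
  have c1 : s.card = s.toLeft.card + s.toRight.card := s.card_toLeft_add_card_toRight.symm
  have c2 : s.toLeft.card = s.toLeft.toLeft.card + s.toLeft.toRight.card :=
    s.toLeft.card_toLeft_add_card_toRight.symm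
  have c3 : s.toRight.card ≤ k := by simpa using Finset.card_le_univ s.toRight
  have hI : ∀ x ∈ s.toLeft.toLeft, x + 1 ∉ s.toLeft.toLeft := by
    intro x hx hx'
    simp only [Finset.mem_toLeft] at hx hx'
    have := @hs _ hx _ hx'
    by_cases h : x = x + 1
    · have h2 := zmod_off (p := p) 0 1 (by omega) (by omega) (by
        push_cast
        exact add_left_cancel (a := x) (by rw [add_zero]; exact h))
      omega
    · have := this (by simpa using h)
      simp [bigG, cAdj] at this
  have c4 : s.toLeft.toRight.card ≤ 1 := by
    rw [Finset.card_le_one]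
    intro x hx y hy
    by_contra hne
    simp only [Finset.mem_toLeft, Finset.mem_toRight] at hx hy
    have := @hs _ hx _ hy (by simpa using hne)
    simp [bigG] at this
  have c5 := indep_le (by omega) _ hI
  rcases s.toLeft.toRight.eq_empty_or_nonempty with h | ⟨i, hi⟩
  · rw [h] at c2
    simp at c2
    omega
  · simp only [Finset.mem_toLeft, Finset.mem_toRight] at hi
    have hadj : ∀ x ∈ s.toLeft.toLeft, x ≠ i ∧ x ≠ i + 1 ∧ x ≠ i + 4 := by
      intro x hx
      simp only [Finset.mem_toLeft] at hx
      exact @hs _ hx _ hi (by simp)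
    have c6 := indep_le' hp _ hI i (fun h => (hadj _ h).1 rfl) (fun h => (hadj _ h).2.1 rfl)
      (fun h => (hadj _ h).2.2 rfl)
    omega

/-- Either two suitable breaks, or a long constant arc. -/
lemma breaks {p : ℕ} (hp : 3 ≤ p) (P : ZMod (2 * p + 1) → Prop)
    (hno : ∀ b, P b → ∀ t : ℕ, 1 ≤ t → t ≤ p - 2 → ¬ P (b + ((1 + 2 * t : ℕ) : ZMod (2 * p + 1)))) :
    ∃ b, ∀ d : ℕ, 3 ≤ d → d ≤ 2 * p → ¬ P (b + (d : ZMod (2 * p + 1))) := by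
  have top := zmod_top p
  have H : ∀ x, P x → ∀ d : ℕ, 3 ≤ d → d ≤ 2 * p - 2 → ¬ P (x + (d : ZMod (2 * p + 1))) := by
    intro x hx d h3 hd hP
    rcases Nat.even_or_odd' d with ⟨c, rfl | rfl⟩
    · apply hno _ hP (p - c) (by omega) (by omega)
      have : x + ((2 * c : ℕ) : ZMod (2 * p + 1)) + ((1 + 2 * (p - c) : ℕ) : ZMod (2 * p + 1)) = x := by
        rw [add_assoc, ← Nat.cast_add]
        have : 2 * c + (1 + 2 * (p - c)) = 2 * p + 1 := by omega
        rw [this, ZMod.natCast_self, add_zero]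
      rwa [this]
    · apply hno _ hx c (by omega) (by omega)
      rwa [add_comm 1]
  have shift : ∀ (x : ZMod (2 * p + 1)) (a b : ℕ), a + b = 2 * p + 1 →
      x + (a : ZMod (2 * p + 1)) = x - (b : ZMod (2 * p + 1)) := by
    intro x a b hab
    have := ZMod.natCast_self (2 * p + 1)
    rw [← hab] at this
    push_cast at this
    rw [eq_sub_iff_add_eq, add_assoc, ← Nat.cast_add]
    rw [hab, ZMod.natCast_self, add_zero]
  by_cases hex : ∃ x, P x
  swap
  · exact ⟨0, fun d _ _ h => hex ⟨_, h⟩⟩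
  obtain ⟨x, hx⟩ := hex
  have m3 : ¬ P (x - 3) := by
    have := H x hx (2 * p - 2) (by omega) (by omega)
    rwa [shift x _ 3 (by omega)] at this
  have m4 : ¬ P (x - 4) := by
    have := H x hx (2 * p - 3) (by omega) (by omega)
    rwa [shift x _ 4 (by omega)] at this
  have fin : ∀ b, P b → ¬ P (b - 1) → ¬ P (b - 2) → ∀ d : ℕ, 3 ≤ d → d ≤ 2 * p →
      ¬ P (b + (d : ZMod (2 * p + 1))) := by
    intro b hb h1 h2 d h3 hd
    by_cases hd1 : d = 2 * p
    · rw [shift b d 1 (by omega)]; simpa using h1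
    by_cases hd2 : d = 2 * p - 1
    · rw [shift b d 2 (by omega)]; simpa using h2
    exact H b hb d h3 (by omega)
  by_cases h2 : P (x - 2)
  · refine ⟨x - 2, fin _ h2 ?_ ?_⟩
    · convert m3 using 2; ring
    · convert m4 using 2; ring
  by_cases h1 : P (x - 1)
  · refine ⟨x - 1, fin _ h1 ?_ ?_⟩
    · convert h2 using 2; ring
    · convert m3 using 2; ring
  exact ⟨x, fin _ hx h1 h2⟩

lemma varrows_of_le {V : Type*} {G : SimpleGraph V} {r : ℕ} {a : Fin r → ℕ} (C : V → Fin r)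
    (i : Fin r) (s : Finset V) (hs : G.IsClique (s : Set V)) (hc : a i ≤ s.card)
    (hC : ∀ v ∈ s, C v = i) :
    ∃ i : Fin r, ∃ s : Finset V, G.IsNClique (a i) s ∧ ∀ v ∈ s, C v = i := by
  obtain ⟨t, hts, ht⟩ := Finset.exists_subset_card_eq hc
  exact ⟨i, t, ⟨hs.subset (by exact_mod_cast hts), ht⟩, fun v hv => hC v (hts hv)⟩

lemma bigG_arrows {p k r : ℕ} (hp : 3 ≤ p) (a : Fin r → ℕ) (ha : ∀ i, 1 ≤ a i)
    (hap : ∀ i, a i ≤ p) (hsum : ∑ i, (a i - 1) = p + 1 + k) : VArrows (bigG p k) a := by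
  classical
  intro C
  set f : ZMod (2 * p + 1) → Fin r := fun x => C (.inl (.inl x)) with hf
  by_cases hgood : ∃ b : ZMod (2 * p + 1), ∃ t : ℕ, 1 ≤ t ∧ t ≤ p - 2 ∧ f b ≠ f (b + 1) ∧
      f (b + ((1 + 2 * t : ℕ) : ZMod (2 * p + 1))) ≠
        f (b + ((1 + 2 * t : ℕ) : ZMod (2 * p + 1)) + 1)
  · obtain ⟨b, t, ht1, ht2, hb1, hb2⟩ := hgood
    let e : ℕ → ℕ := fun j => if j = 0 then 0 else if j ≤ t + 1 then 2 * j - 1 else 2 * j - 2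
    let off : ℕ → ZMod (2 * p + 1) := fun j => b + ((e j : ℕ) : ZMod (2 * p + 1))
    have he : ∀ j ≤ p, e j ≤ 2 * p - 2 ∧ e j ≠ 2 := by
      intro j hj
      simp only [e]
      split_ifs <;> omega
    have echar : ∀ j, (j = 0 ∧ e j = 0) ∨ (1 ≤ j ∧ j ≤ t + 1 ∧ e j = 2 * j - 1) ∨
        (t + 2 ≤ j ∧ e j = 2 * j - 2) := by
      intro j
      simp only [e]
      split_ifs <;> omega
    have einj : ∀ i j, e i = e j → i = j := by
      intro i j h
      simp only [e] at h
      split_ifs at h <;> omega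
    have offinj : ∀ i ≤ p, ∀ j ≤ p, off i = off j → i = j := by
      intro i hi j hj h
      have h1 := (he i hi).1
      have h2 := (he j hj).1
      exact einj i j (zmod_off _ _ (by omega) (by omega) (add_left_cancel h))
    have offsucc : ∀ i ≤ p, ∀ j ≤ p, off i = off j + 1 → f (off i) ≠ f (off j) := by
      intro i hi j hj h
      have h1 := (he i hi).1
      have h2 := (he j hj).1
      have h3 := zmod_succ (p := p) (e i) (e j) (by omega) (by omega)
        (add_left_cancel (a := b) (by rw [← add_assoc]; exact h))
      have h4 : e j = 0 ∨ e j = 1 + 2 * t := by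
        have hi' := echar i
        have hj' := echar j
        omega
      rw [h]
      rcases h4 with h4 | h4
      · have : off j = b := by simp [off, h4]
        rw [this]; exact hb1.symm
      · have : off j = b + ((1 + 2 * t : ℕ) : ZMod (2 * p + 1)) := by simp only [off, h4]
        rw [this]; exact hb2.symm
    let X : Finset (ZMod (2 * p + 1)) := (Finset.range (p + 1)).image off
    have hX : X.card = p + 1 := by
      rw [Finset.card_image_of_injOn, Finset.card_range]
      intro i hi j hj h
      simp at hi hj
      exact offinj i (by omega) j (by omega) h
    let Y : Finset ((ZMod (2 * p + 1) ⊕ ZMod (2 * p + 1)) ⊕ Fin k) :=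
      (X.disjSum {b - 2}).disjSum Finset.univ
    have hY : Y.card = p + 2 + k := by
      simp only [Y, Finset.card_disjSum, hX, Finset.card_singleton, Finset.card_univ,
        Fintype.card_fin]
    obtain ⟨c, hc⟩ : ∃ c, a c - 1 < (Y.filter (fun v => C v = c)).card := by
      by_contra hcon
      push Not at hcon
      have h1 : Y.card = ∑ c, (Y.filter (fun v => C v = c)).card :=
        Finset.card_eq_sum_card_fiberwise (fun _ _ => by simp)
      have h2 := Finset.sum_le_sum (s := Finset.univ) (fun c _ => hcon c)
      omega
    refine varrows_of_le C c (Y.filter (fun v => C v = c)) ?_ (by omega)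
      (fun v hv => (Finset.mem_filter.1 hv).2)
    have hXw : ∀ x ∈ X, x ≠ b - 2 ∧ x ≠ b - 2 + 1 ∧ x ≠ b - 2 + 4 := by
      intro x hx
      simp only [X, Finset.mem_image, Finset.mem_range] at hx
      obtain ⟨j, hj, rfl⟩ := hx
      obtain ⟨h1, h2⟩ := he j (by omega)
      have top := zmod_top p
      refine ⟨?_, ?_, ?_⟩ <;> intro h
      · have := zmod_off (p := p) (e j) (2 * p - 1) (by omega) (by omega) (by
          rw [Nat.cast_sub (by omega)]
          push_cast
          simp only [off] at h
          linear_combination h - top)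
        omega
      · have := zmod_off (p := p) (e j) (2 * p) (by omega) (by omega) (by
          push_cast
          simp only [off] at h
          linear_combination h - top)
        omega
      · have := zmod_off (p := p) (e j) 2 (by omega) (by omega) (by
          push_cast
          simp only [off] at h
          linear_combination h)
        omega
    have hXX : ∀ x ∈ X, ∀ y ∈ X, f x = f y → x ≠ y + 1 := by
      intro x hx y hy hxy h
      simp only [X, Finset.mem_image, Finset.mem_range] at hx hy
      obtain ⟨i, hi, rfl⟩ := hx
      obtain ⟨j, hj, rfl⟩ := hy
      exact offsucc i (by omega) j (by omega) h hxy
    intro u hu v hv huv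
    simp only [Finset.coe_filter, Set.mem_setOf_eq] at hu hv
    obtain ⟨hu, huc⟩ := hu
    obtain ⟨hv, hvc⟩ := hv
    rcases u with ((x | x) | x) <;> rcases v with ((y | y) | y)
    · have hx : x ∈ X := by simpa [Y] using hu
      have hy : y ∈ X := by simpa [Y] using hv
      refine ⟨fun h => huv (by rw [h]), hXX x hx y hy ?_, hXX y hy x hx ?_⟩
      · simp only [hf, huc, hvc]
      · simp only [hf, huc, hvc]
    · have hx : x ∈ X := by simpa [Y] using hu
      have hy : y = b - 2 := by simpa [Y] using hv
      rw [hy]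
      exact hXw x hx
    · trivial
    · have hx : y ∈ X := by simpa [Y] using hv
      have hy : x = b - 2 := by simpa [Y] using hu
      rw [hy]
      exact hXw y hx
    · have hx : x = b - 2 := by simpa [Y] using hu
      have hy : y = b - 2 := by simpa [Y] using hv
      exact absurd (by rw [hx, hy]) huv
    · trivial
    · trivial
    · trivial
    · exact fun h => huv (by rw [h])
  · push Not at hgood
    obtain ⟨b, hb⟩ := breaks hp (fun x => f x ≠ f (x + 1)) (by
      intro b hb t h1 h2
      simpa using hgood b t h1 h2 hb)
    have hconst : ∀ j : ℕ, j ≤ 2 * p - 2 →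
        f (b + 3 + (j : ZMod (2 * p + 1))) = f (b + 3) := by
      intro j
      induction j with
      | zero => simp
      | succ j ih =>
        intro hj
        rw [← ih (by omega)]
        have := hb (3 + j) (by omega) (by omega)
        simp only [ne_eq, not_not] at this
        push_cast at this ⊢
        rw [← add_assoc] at this ⊢
        exact this.symm
    let off : ℕ → (ZMod (2 * p + 1) ⊕ ZMod (2 * p + 1)) ⊕ Fin k :=
      fun j => .inl (.inl (b + 3 + ((2 * j : ℕ) : ZMod (2 * p + 1))))
    refine varrows_of_le C (f (b + 3)) ((Finset.range p).image off) ?_ ?_ ?_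
    · intro u hu v hv huv
      simp only [Finset.coe_image, Set.mem_image, Finset.coe_range, Set.mem_Iio] at hu hv
      obtain ⟨i, hi, rfl⟩ := hu
      obtain ⟨j, hj, rfl⟩ := hv
      refine ⟨fun h => huv (by simp only [off, h]), fun h => ?_, fun h => ?_⟩
      · have := zmod_succ (p := p) (2 * i) (2 * j) (by omega) (by omega)
          (add_left_cancel (a := b + 3) (by rw [← add_assoc]; exact h))
        omega
      · have := zmod_succ (p := p) (2 * j) (2 * i) (by omega) (by omega)
          (add_left_cancel (a := b + 3) (by rw [← add_assoc]; exact h))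
        omega
    · rw [Finset.card_image_of_injOn, Finset.card_range]
      · exact hap _
      · intro i hi j hj h
        simp only [Finset.coe_range, Set.mem_Iio] at hi hj
        simp only [off, Sum.inl.injEq] at h
        have := zmod_off (p := p) _ _ (by omega) (by omega) (add_left_cancel h)
        omega
    · intro v hv
      simp only [Finset.mem_image, Finset.mem_range] at hv
      obtain ⟨j, hj, rfl⟩ := hv
      exact hconst (2 * j) (by omega)

/-- **Main theorem.** If `a_1, …, a_r` are positive integers,
`m = Σ (a_i - 1) + 1`, `p = max {a_1, …, a_r}`, `p ≥ 3` and `m ≥ p + 2`, then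
`F(a_1, …, a_r; m-1) ≤ m + 3p`. -/
theorem folkman_upper_bound {r : ℕ} (hr : 1 ≤ r) (a : Fin r → ℕ)
    (ha : ∀ i, 1 ≤ a i) (m p : ℕ)
    (hm : m = (∑ i, (a i - 1)) + 1) (hp : p = Finset.univ.sup a)
    (hp3 : 3 ≤ p) (hmp : p + 2 ≤ m) :
    vertexFolkman a (m - 1) ≤ m + 3 * p := by
  classical
  obtain ⟨k, rfl⟩ := Nat.exists_eq_add_of_le hmp
  have hap : ∀ i, a i ≤ p := fun i => by rw [hp]; exact Finset.le_sup (Finset.mem_univ i)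
  have harr := bigG_arrows (k := k) hp3 a ha hap (by omega)
  apply Nat.sInf_le
  have hcard : Fintype.card ((ZMod (2 * p + 1) ⊕ ZMod (2 * p + 1)) ⊕ Fin k) =
      p + 2 + k + 3 * p := by
    simp only [Fintype.card_sum, ZMod.card, Fintype.card_fin]
    ring
  let φ := Fintype.equivFinOfCardEq hcard
  let ψ : bigG p k ≃g (bigG p k).map φ.toEmbedding := SimpleGraph.Iso.map φ _
  refine ⟨(bigG p k).map φ.toEmbedding, ?_, ?_⟩
  · intro C
    obtain ⟨i, s, hs, hC⟩ := harr (fun v => C (φ v))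
    refine ⟨i, s.map φ.toEmbedding, hs.map, ?_⟩
    intro v hv
    simp only [Finset.mem_map] at hv
    obtain ⟨w, hw, rfl⟩ := hv
    exact hC w hw
  · obtain ⟨s, hs⟩ := ((bigG p k).map φ.toEmbedding).exists_isNClique_cliqueNum
    have h1 : (bigG p k).IsClique ((s.map φ.symm.toEmbedding : Finset _) : Set _) := by
      intro u hu v hv huv
      simp only [Finset.coe_map, Set.mem_image, Finset.mem_coe] at hu hv
      obtain ⟨x, hx, rfl⟩ := hu
      obtain ⟨y, hy, rfl⟩ := hv
      have := hs.isClique hx hy (fun h => huv (by rw [h]))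
      exact ψ.symm.map_adj_iff.2 this
    have h2 := bigG_clique hp3 _ h1
    rw [Finset.card_map, hs.card_eq] at h2
    omega
end

section
/- Let p ≥ 1, let V ⊆ V(C_{2p+1}) with |V| = n < 2p+1 and n even, let G = C̄_{2p+1}[V], and let G_1, …, G_s be the connected components of the graph C_{2p+1}[V]. Then cl(G) = ⌈n/2⌉ holds if and only if all the numbers |V(G_1)|, …, |V(G_s)| are even (otherwise cl(G) > ⌈n/2⌉). -/
namespace CycAux

open Classical in
/-- Number of consecutive occupied positions ending at `k`. -/
noncomputable def run (P : ℕ → Prop) : ℕ → ℕ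
  | 0 => if P 0 then 1 else 0
  | k + 1 => if P (k + 1) then run P k + 1 else 0

lemma run_pos {P : ℕ → Prop} {k : ℕ} (h : P k) : 1 ≤ run P k := by
  cases k <;> simp [run, h]

lemma run_of_not {P : ℕ → Prop} {k : ℕ} (h : ¬ P k) : run P k = 0 := by
  cases k <;> simp [run, h]

lemma run_succ {P : ℕ → Prop} {k : ℕ} (h : P (k + 1)) : run P (k + 1) = run P k + 1 := by
  simp [run, h]

lemma run_le (P : ℕ → Prop) (k : ℕ) : run P k ≤ k + 1 := by
  induction k with
  | zero => simp only [run]; split_ifs <;> omega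
  | succ k ih => simp only [run]; split_ifs <;> omega

lemma run_pred {P : ℕ → Prop} {k : ℕ} (h : 2 ≤ run P k) :
    ∃ j, k = j + 1 ∧ P j ∧ run P k = run P j + 1 := by
  cases k with
  | zero => have := run_le P 0; omega
  | succ j =>
    have hP : P (j + 1) := by
      by_contra hh
      have := run_of_not hh
      omega
    have e := run_succ hP
    refine ⟨j, rfl, ?_, e⟩
    by_contra hh
    have := run_of_not hh
    omega

lemma run_back {P : ℕ → Prop} {k : ℕ} (j : ℕ) (h : j < run P k) :
    P (k - j) ∧ run P (k - j) = run P k - j := by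
  induction j with
  | zero =>
    refine ⟨?_, by simp⟩
    by_contra hh
    have := run_of_not hh
    simp at this
    omega
  | succ j ih =>
    obtain ⟨h1, h2⟩ := ih (by omega)
    obtain ⟨i, hi, hPi, e⟩ := run_pred (P := P) (k := k - j) (by omega)
    have : k - (j + 1) = i := by omega
    rw [this]
    exact ⟨hPi, by omega⟩

section
variable {V : Type*} [Fintype V] [DecidableEq V] (H : SimpleGraph V) (pos : V → ℕ)

/-- run length at the position of `v`. -/
noncomputable def d (v : V) : ℕ := run (fun k => ∃ x, pos x = k) (pos v)

/-- Every vertex at odd place in its run has a successor. -/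
def M : Prop := ∀ u, Odd (d pos u) → ∃ w, pos w = pos u + 1

variable {pos}

lemma d_pos (v : V) : 1 ≤ d pos v := run_pos ⟨v, rfl⟩

lemma d_succ {u v : V} (h : pos v = pos u + 1) : d pos v = d pos u + 1 := by
  unfold d
  rw [h]
  exact run_succ ⟨v, h⟩

lemma exists_pred {v : V} (h : Even (d pos v)) : ∃ u, pos v = pos u + 1 := by
  have h1 := d_pos (pos := pos) v
  obtain ⟨j, hj, ⟨u, hu⟩, _⟩ := run_pred (P := fun k => ∃ x, pos x = k) (k := pos v)
    (by change 2 ≤ d pos v; grind)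
  exact ⟨u, by omega⟩

variable {H}

lemma even_supp_of_M (hinj : Function.Injective pos)
    (hadj : ∀ u v, H.Adj u v ↔ pos u + 1 = pos v ∨ pos v + 1 = pos u)
    (hM : M pos) (c : H.ConnectedComponent) : Even c.supp.ncard := by
  classical
  rw [Set.ncard_eq_toFinset_card', ← Finset.card_filter_add_card_filter_not
    (s := c.supp.toFinset) (fun v => Odd (d pos v))]
  have : (c.supp.toFinset.filter (fun v => Odd (d pos v))).card =
      (c.supp.toFinset.filter (fun v => ¬ Odd (d pos v))).card := by
    choose! g hg using hM
    refine Finset.card_bij (fun a _ => g a) ?_ ?_ ?_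
    · intro a ha
      simp only [Finset.mem_filter, Set.mem_toFinset, SimpleGraph.ConnectedComponent.mem_supp_iff]
        at ha ⊢
      have h1 := hg a ha.2
      have h2 := d_succ h1
      refine ⟨?_, by grind⟩
      rw [← ha.1]
      exact SimpleGraph.ConnectedComponent.sound
        (SimpleGraph.Adj.reachable ((hadj _ _).2 (Or.inr h1.symm)))
    · intro a ha b hb hab
      simp only [Finset.mem_filter] at ha hb
      have h1 := hg a ha.2
      have h2 := hg b hb.2
      rw [hab] at h1
      exact hinj (by omega)
    · intro b hb
      simp only [Finset.mem_filter, Set.mem_toFinset, SimpleGraph.ConnectedComponent.mem_supp_iff]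
        at hb
      obtain ⟨u, hu⟩ := exists_pred (by simpa using hb.2)
      have h2 := d_succ hu
      have h3 : Odd (d pos u) := by grind
      refine ⟨u, ?_, hinj (by rw [hg u h3, hu])⟩
      simp only [Finset.mem_filter, Set.mem_toFinset, SimpleGraph.ConnectedComponent.mem_supp_iff]
      refine ⟨?_, h3⟩
      rw [← hb.1]
      exact SimpleGraph.ConnectedComponent.sound
        (SimpleGraph.Adj.reachable ((hadj _ _).2 (Or.inl hu.symm)))
  rw [this]
  exact ⟨_, rfl⟩

lemma indep_le_of_M (hinj : Function.Injective pos)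
    (hadj : ∀ u v, H.Adj u v ↔ pos u + 1 = pos v ∨ pos v + 1 = pos u)
    (hM : M pos) (I : Finset V) (hI : ∀ u ∈ I, ∀ v ∈ I, ¬ H.Adj u v) :
    2 * I.card ≤ Fintype.card V := by
  classical
  have key : ∀ u, ∃ w, (Odd (d pos u) → pos w = pos u + 1) ∧
      (¬ Odd (d pos u) → pos u = pos w + 1) := by
    intro u
    by_cases h : Odd (d pos u)
    · obtain ⟨w, hw⟩ := hM u h
      exact ⟨w, fun _ => hw, fun h' => absurd h h'⟩
    · obtain ⟨w, hw⟩ := exists_pred (by simpa using h)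
      exact ⟨w, fun h' => absurd h' h, fun _ => hw⟩
  choose s hs1 hs2 using key
  have hsinj : Function.Injective s := by
    intro a b hab
    apply hinj
    have a1 := hs1 a
    have a2 := hs2 a
    have b1 := hs1 b
    have b2 := hs2 b
    rw [← hab] at b1 b2
    by_cases ha : Odd (d pos a) <;> by_cases hb : Odd (d pos b)
    · have := a1 ha; have := b1 hb; omega
    · have := d_succ (a1 ha); have := d_succ (b2 hb); grind
    · have := d_succ (a2 ha); have := d_succ (b1 hb); grind
    · have := a2 ha; have := b2 hb; omega
  have hdis : Disjoint I (I.image s) := by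
    rw [Finset.disjoint_left]
    intro a ha ha'
    obtain ⟨b, hb, rfl⟩ := Finset.mem_image.1 ha'
    refine hI _ ha _ hb ((hadj _ _).2 ?_)
    by_cases h : Odd (d pos b)
    · right; exact (hs1 b h).symm
    · left; exact (hs2 b h).symm
  have := Finset.card_le_univ (I ∪ I.image s)
  rw [Finset.card_union_of_disjoint hdis, Finset.card_image_of_injective _ hsinj] at this
  omega

lemma M_of_even (hinj : Function.Injective pos)
    (hadj : ∀ u v, H.Adj u v ↔ pos u + 1 = pos v ∨ pos v + 1 = pos u)
    (hE : ∀ c : H.ConnectedComponent, Even c.supp.ncard) : M pos := by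
  classical
  intro u hu
  by_contra hno
  push Not at hno
  have hle : d pos u ≤ pos u + 1 := run_le _ _
  have hdp := d_pos (pos := pos) u
  have hback : ∀ j < d pos u, ∃ x, pos x = pos u - j ∧ d pos x = d pos u - j := by
    intro j hj
    obtain ⟨⟨x, hx⟩, h2⟩ := run_back (P := fun k => ∃ x, pos x = k) (k := pos u) j hj
    refine ⟨x, hx, ?_⟩
    unfold d
    rw [hx]
    exact h2
  have hsub : ∀ v, H.Reachable u v → pos u + 1 ≤ pos v + d pos u ∧ pos v ≤ pos u := by
    rintro v ⟨w⟩
    have gen : ∀ {a b : V} (w : H.Walk a b), (pos u + 1 ≤ pos a + d pos u ∧ pos a ≤ pos u) →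
        (pos u + 1 ≤ pos b + d pos u ∧ pos b ≤ pos u) := by
      intro a b w
      induction w with
      | nil => exact id
      | @cons a x b h w ih =>
        intro ha
        apply ih
        rcases (hadj _ _).1 h with h | h
        · have : pos a ≠ pos u := fun e => hno x (by omega)
          omega
        · refine ⟨?_, by omega⟩
          by_contra hlt
          obtain ⟨y, hy, hy2⟩ := hback (d pos u - 1) (by omega)
          have : y = a := hinj (by omega)
          subst this
          have := d_succ h.symm
          have := d_pos (pos := pos) x
          omega
    exact gen w (by omega)
  have hsup : ∀ j, ∀ v, j < d pos u → pos v = pos u - j → H.Reachable u v := by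
    intro j
    induction j with
    | zero =>
      intro v _ hv
      rw [hinj (a₁ := v) (a₂ := u) (by omega)]
    | succ j ih =>
      intro v hj hv
      obtain ⟨x, hx, _⟩ := hback j (by omega)
      exact (ih x (by omega) hx).trans
        (SimpleGraph.Adj.reachable ((hadj _ _).2 (Or.inr (by omega))))
  have himg : pos '' (H.connectedComponentMk u).supp =
      (Finset.Icc (pos u + 1 - d pos u) (pos u) : Set ℕ) := by
    ext k
    simp only [Set.mem_image, SimpleGraph.ConnectedComponent.mem_supp_iff, Finset.coe_Icc,
      Set.mem_Icc, SimpleGraph.ConnectedComponent.eq]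
    constructor
    · rintro ⟨v, hv, rfl⟩
      have := hsub v hv.symm
      omega
    · rintro ⟨h1, h2⟩
      obtain ⟨x, hx, _⟩ := hback (pos u - k) (by omega)
      exact ⟨x, (hsup (pos u - k) x (by omega) hx).symm, by omega⟩
  have hc := Set.ncard_image_of_injective (H.connectedComponentMk u).supp hinj
  rw [himg, Set.ncard_coe_finset, Nat.card_Icc] at hc
  have := hE (H.connectedComponentMk u)
  rw [← hc] at this
  have e : pos u + 1 - (pos u + 1 - d pos u) = d pos u := by omega
  rw [e] at this
  grind

lemma main_aux (hinj : Function.Injective pos)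
    (hadj : ∀ u v, H.Adj u v ↔ pos u + 1 = pos v ∨ pos v + 1 = pos u)
    (G : SimpleGraph V) (hG : ∀ u v, G.Adj u v ↔ u ≠ v ∧ ¬ H.Adj u v) :
    2 * G.cliqueNum = Fintype.card V ↔ ∀ c : H.ConnectedComponent, Even c.supp.ncard := by
  classical
  set A : Finset V := Finset.univ.filter (fun v => Odd (d pos v)) with hA
  set B : Finset V := Finset.univ.filter (fun v => ¬ Odd (d pos v)) with hB
  have hAB : A.card + B.card = Fintype.card V :=
    Finset.card_filter_add_card_filter_not (s := (Finset.univ : Finset V)) _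
  have hAc : A.card ≤ G.cliqueNum := by
    apply SimpleGraph.IsClique.card_le_cliqueNum
    intro a ha b hb hab
    simp only [hA, Finset.coe_filter, Finset.mem_univ, true_and, Set.mem_setOf_eq] at ha hb
    rw [hG, hadj]
    refine ⟨hab, ?_⟩
    rintro (h | h)
    · have := d_succ h.symm; grind
    · have := d_succ h.symm; grind
  have hpred : ∀ v : V, ¬ Odd (d pos v) → ∃ u, pos v = pos u + 1 :=
    fun v hv => exists_pred (by simpa using hv)
  choose! g hg using hpred
  have hgs : B.image g ⊆ A := by
    intro x hx
    obtain ⟨b, hb, rfl⟩ := Finset.mem_image.1 hx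
    simp only [hA, hB, Finset.mem_filter, Finset.mem_univ, true_and] at hb ⊢
    have := d_succ (hg b hb)
    grind
  have hgc : (B.image g).card = B.card := by
    apply Finset.card_image_of_injOn
    intro a ha b hb hab
    simp only [hB, Finset.coe_filter, Finset.mem_univ, true_and, Set.mem_setOf_eq] at ha hb
    have h1 := hg a ha
    have h2 := hg b hb
    rw [hab] at h1
    exact hinj (by omega)
  have hBA : B.card ≤ A.card := hgc ▸ Finset.card_le_card hgs
  constructor
  · intro h
    apply even_supp_of_M hinj hadj
    have heq := Finset.eq_of_subset_of_card_le hgs (by omega)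
    intro u hu
    have : u ∈ B.image g := by rw [heq]; simp [hA, hu]
    obtain ⟨b, hb, rfl⟩ := Finset.mem_image.1 this
    exact ⟨b, hg b (by simpa [hB] using hb)⟩
  · intro h
    have hM := M_of_even hinj hadj h
    obtain ⟨I, hI⟩ := G.exists_isNClique_cliqueNum
    have := indep_le_of_M hinj hadj hM I (by
      intro u hu v hv huv
      exact ((hG u v).1 (hI.isClique hu hv huv.ne)).2 huv)
    rw [hI.card_eq] at this
    omega

end

end CycAux

/-- **Lemma 1 (even case).** Let `V ⊆ V(C_{2p+1})` with `|V| = n < 2p+1`, `n` even, and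
let `G = C̄_{2p+1}[V]`.  Then `cl(G) = ⌈n/2⌉` if and only if every connected component of
`C_{2p+1}[V]` has an even number of vertices. -/
theorem cliqueNum_induce_compl_cycle_eq_iff_even (p : ℕ) (hp : 1 ≤ p)
    (S : Finset (Fin (2*p+1))) (n : ℕ) (hcard : S.card = n) (hn : n < 2*p+1)
    (hne : Even n) :
    (((((SimpleGraph.cycleGraph (2*p+1))ᶜ.induce (S : Set (Fin (2*p+1)))).cliqueNum : ℤ))
        = ⌈(n : ℚ) / 2⌉)
      ↔ ∀ c : ((SimpleGraph.cycleGraph (2*p+1)).induce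
          (S : Set (Fin (2*p+1)))).ConnectedComponent, Even c.supp.ncard := by
  classical
  obtain ⟨v0, hv0⟩ : ∃ v, v ∉ S := by
    by_contra! h
    have : S = Finset.univ := by ext; simp [h]
    rw [this] at hcard
    simp at hcard
    omega
  have hc : Fintype.card (S : Set (Fin (2*p+1))) = n := by simpa using hcard
  rw [← CycAux.main_aux (pos := fun x : (S : Set (Fin (2*p+1))) => (x.1 - v0).val)
    (H := (SimpleGraph.cycleGraph (2*p+1)).induce (S : Set (Fin (2*p+1)))) ?_ ?_
    ((SimpleGraph.cycleGraph (2*p+1))ᶜ.induce (S : Set (Fin (2*p+1)))) ?_, hc]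
  · obtain ⟨k, rfl⟩ := hne
    have : ((k + k : ℕ) : ℚ) / 2 = ((k : ℤ) : ℚ) := by push_cast; ring
    rw [this, Int.ceil_intCast]
    omega
  · intro a b hab
    exact Subtype.ext (sub_left_injective (Fin.val_injective hab))
  · rintro ⟨u, hu⟩ ⟨v, hv⟩
    have hu0 : u ≠ v0 := by rintro rfl; exact hv0 hu
    have hv0' : v ≠ v0 := by rintro rfl; exact hv0 hv
    simp only [SimpleGraph.comap_adj, Function.Embedding.subtype_apply,
      SimpleGraph.cycleGraph_adj']
    rw [← sub_sub_sub_cancel_right u v v0, ← sub_sub_sub_cancel_right v u v0]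
    have ha : u - v0 ≠ 0 := sub_ne_zero.2 hu0
    have hb : v - v0 ≠ 0 := sub_ne_zero.2 hv0'
    generalize u - v0 = a at *
    generalize v - v0 = b at *
    have key : ∀ a b : Fin (2*p+1), a ≠ 0 → b ≠ 0 → ((a - b).val = 1 ↔ b.val + 1 = a.val) := by
      intro a b ha hb
      have ha' : a.val ≠ 0 := fun h => ha (Fin.ext h)
      have hb' : b.val ≠ 0 := fun h => hb (Fin.ext h)
      have h1 := a.isLt
      have h2 := b.isLt
      rw [Fin.val_sub]
      by_cases h : b.val ≤ a.val
      · rw [show 2*p+1 - b.val + a.val = (a.val - b.val) + (2*p+1) by omega,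
          Nat.add_mod_right, Nat.mod_eq_of_lt (by omega)]
        omega
      · rw [Nat.mod_eq_of_lt (by omega)]
        omega
    rw [key a b ha hb, key b a hb ha]
    exact or_comm
  · rintro ⟨u, hu⟩ ⟨v, hv⟩
    simp [SimpleGraph.compl_adj]
end

section
/- Let p ≥ 1, let V ⊆ V(C_{2p+1}) with |V| = n < 2p+1 and n odd, let G = C̄_{2p+1}[V], and let G_1, …, G_s be the connected components of the graph C_{2p+1}[V]. Then cl(G) = ⌈n/2⌉ holds if and only if exactly one of the numbers |V(G_1)|, …, |V(G_s)| is odd (otherwise cl(G) > ⌈n/2⌉). -/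
open Finset in
theorem aux_interval (T : Finset ℕ) (hne : T.Nonempty)
    (h : ∀ x ∈ T, ∀ y ∈ T, ∀ k, x ≤ k → k ≤ y → k ∈ T) :
    ∃ a, T = Finset.Ico a (a + T.card) := by
  have hT : T = Finset.Ico (T.min' hne) (T.max' hne + 1) := by
    ext k
    simp only [Finset.mem_Ico]
    constructor
    · intro hk
      have h1 := T.min'_le k hk
      have h2 := T.le_max' k hk
      omega
    · rintro ⟨h1, h2⟩
      exact h _ (T.min'_mem hne) _ (T.max'_mem hne) k h1 (by omega)
  have hle : T.min' hne ≤ T.max' hne := T.min'_le _ (T.max'_mem hne)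
  have hc : T.card = T.max' hne + 1 - T.min' hne := by
    conv_lhs => rw [hT]
    simp
  refine ⟨T.min' hne, ?_⟩
  rw [hc]
  convert hT using 2
  omega

theorem aux_walk {W : Type*} (H : SimpleGraph W) (f : W → ℕ)
    (hadj : ∀ u v, H.Adj u v → (f u = f v + 1 ∨ f v = f u + 1)) {u v : W} (w : H.Walk u v) :
    ∀ k, (f u ≤ k ∧ k ≤ f v ∨ f v ≤ k ∧ k ≤ f u) → ∃ x, H.Reachable u x ∧ f x = k := by
  induction w with
  | nil => intro k hk; exact ⟨_, SimpleGraph.Reachable.refl _, by omega⟩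
  | cons h q ih =>
    rename_i u u' v
    intro k hk
    by_cases hku : k = f u
    · exact ⟨u, SimpleGraph.Reachable.refl _, hku.symm⟩
    · have := hadj _ _ h
      obtain ⟨x, hx, rfl⟩ := ih k (by omega)
      exact ⟨x, h.reachable.trans hx, rfl⟩

open Finset Classical in
theorem aux_main {W : Type*} [Fintype W] (H : SimpleGraph W) (f : W → ℕ)
    (hf : Function.Injective f)
    (hadj : ∀ u v, H.Adj u v ↔ (f u = f v + 1 ∨ f v = f u + 1)) :
    ∃ N : ℕ, 2 * H.indepNum = Fintype.card W + N ∧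
      ((∃! c : H.ConnectedComponent, Odd c.supp.ncard) ↔ N = 1) := by
  refine ⟨(univ.filter (fun c : H.ConnectedComponent => Odd c.supp.ncard)).card, ?_,
    Fintype.existsUnique_iff_card_one _⟩
  let A : H.ConnectedComponent → Finset W := fun c =>
    univ.filter (fun v => H.connectedComponentMk v = c)
  have hA : ∀ c, c.supp.ncard = (A c).card := by
    intro c
    rw [← Set.ncard_coe_finset]
    congr 1
    ext v
    simp [A]
  have hint : ∀ c, ∃ a, (A c).image f = Finset.Ico a (a + (A c).card) := by
    intro c
    have hcard : ((A c).image f).card = (A c).card := card_image_of_injective _ hf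
    rw [← hcard]
    apply aux_interval
    · induction c using SimpleGraph.ConnectedComponent.ind with
      | h v => exact ⟨f v, mem_image_of_mem _ (by simp [A])⟩
    · intro x hx y hy k hxk hky
      simp only [mem_image, A, mem_filter, mem_univ, true_and] at hx hy ⊢
      obtain ⟨u, hu, rfl⟩ := hx
      obtain ⟨v, hv, rfl⟩ := hy
      have hr : H.Reachable u v := SimpleGraph.ConnectedComponent.exact (hu.trans hv.symm)
      obtain ⟨w⟩ := hr
      obtain ⟨x, hx, hxk'⟩ := aux_walk H f (fun u v h => (hadj u v).1 h) w k (Or.inl ⟨hxk, hky⟩)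
      exact ⟨x, by rw [← hu]; exact (SimpleGraph.ConnectedComponent.sound hx).symm, hxk'⟩
  choose a ha using hint
  have hmem : ∀ v, a (H.connectedComponentMk v) ≤ f v ∧
      f v < a (H.connectedComponentMk v) + (A (H.connectedComponentMk v)).card := by
    intro v
    have : f v ∈ (A (H.connectedComponentMk v)).image f := mem_image_of_mem _ (by simp [A])
    rw [ha] at this
    simpa using this
  have hfib : ∀ J : Finset W, J.card = ∑ c, (J.filter (fun v => H.connectedComponentMk v = c)).card :=
    fun J => card_eq_sum_card_fiberwise (fun _ _ => by simp)
  have hupper : ∀ J : Finset W, H.IsIndepSet (J : Set W) → J.card ≤ ∑ c, ((A c).card + 1) / 2 := by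
    intro J hJ
    rw [hfib J]
    apply sum_le_sum
    intro c _
    rw [← card_range (((A c).card + 1) / 2)]
    apply card_le_card_of_injOn (fun v => (f v - a c) / 2)
    · intro v hv
      simp only [coe_filter, Set.mem_ofPred_eq] at hv
      obtain ⟨_, rfl⟩ := hv
      have := hmem v
      simp only [coe_range, Set.mem_Iio]
      omega
    · intro v hv w hw hvw
      simp only [coe_filter, Set.mem_ofPred_eq] at hv hw
      by_contra hne
      have h1 : ¬ H.Adj v w := hJ hv.1 hw.1 hne
      rw [hadj] at h1
      have h2 : f v ≠ f w := fun h => hne (hf h)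
      have h3 := hmem v
      have h4 := hmem w
      rw [hv.2] at h3
      rw [hw.2] at h4
      simp only at hvw
      omega
  have hlower : ∃ J : Finset W, H.IsIndepSet (J : Set W) ∧ ∑ c, ((A c).card + 1) / 2 ≤ J.card := by
    refine ⟨univ.filter (fun v => (f v - a (H.connectedComponentMk v)) % 2 = 0), ?_, ?_⟩
    · intro v hv w hw hne h
      simp only [coe_filter, Set.mem_ofPred_eq, mem_univ, true_and] at hv hw
      have hc : H.connectedComponentMk v = H.connectedComponentMk w :=
        SimpleGraph.ConnectedComponent.sound h.reachable
      have h3 := hmem v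
      have h4 := hmem w
      rw [hadj] at h
      rw [hc] at hv h3
      omega
    · rw [hfib]
      apply sum_le_sum
      intro c _
      conv_lhs => rw [← card_range (((A c).card + 1) / 2)]
      apply card_le_card_of_surjOn (fun v => (f v - a c) / 2)
      intro i hi
      simp only [coe_range, Set.mem_Iio] at hi
      have : a c + 2 * i ∈ (A c).image f := by
        rw [ha]
        simp only [mem_Ico]
        omega
      obtain ⟨v, hv, hvi⟩ := mem_image.1 this
      simp only [A, mem_filter, mem_univ, true_and] at hv
      refine ⟨v, ?_, ?_⟩
      · simp only [coe_filter, Set.mem_ofPred_eq, mem_filter, mem_univ, true_and]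
        refine ⟨?_, hv⟩
        rw [hv]
        omega
      · simp only
        omega
  have hα : H.indepNum = ∑ c, ((A c).card + 1) / 2 := by
    apply le_antisymm
    · obtain ⟨J, hJ⟩ := H.exists_isNIndepSet_indepNum
      rw [← hJ.card_eq]
      exact hupper J hJ.isIndepSet
    · obtain ⟨J, hJ, hle⟩ := hlower
      exact hle.trans hJ.card_le_indepNum
  have hW : Fintype.card W = ∑ c, (A c).card := hfib univ
  rw [hα, hW, card_filter, mul_sum, ← sum_add_distrib]
  apply sum_congr rfl
  intro c _
  rw [hA]
  split_ifs with h
  · obtain ⟨k, hk⟩ := h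
    omega
  · rw [Nat.not_odd_iff_even] at h
    obtain ⟨k, hk⟩ := h
    omega

/-- **Lemma 1 (odd case).** Let `V ⊆ V(C_{2p+1})` with `|V| = n < 2p+1`, `n` odd, and
let `G = C̄_{2p+1}[V]`.  Then `cl(G) = ⌈n/2⌉` if and only if exactly one connected
component of `C_{2p+1}[V]` has an odd number of vertices. -/
theorem cliqueNum_induce_compl_cycle_eq_iff_odd (p : ℕ) (hp : 1 ≤ p)
    (S : Finset (Fin (2*p+1))) (n : ℕ) (hcard : S.card = n) (hn : n < 2*p+1)
    (hno : Odd n) :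
    (((((SimpleGraph.cycleGraph (2*p+1))ᶜ.induce (S : Set (Fin (2*p+1)))).cliqueNum : ℤ))
        = ⌈(n : ℚ) / 2⌉)
      ↔ ∃! c : ((SimpleGraph.cycleGraph (2*p+1)).induce
          (S : Set (Fin (2*p+1)))).ConnectedComponent, Odd c.supp.ncard := by
  classical
  obtain ⟨m, hm⟩ : ∃ m, m ∉ S := by
    by_contra! h
    have : S = Finset.univ := Finset.eq_univ_iff_forall.2 h
    rw [this] at hcard
    simp at hcard
    omega
  have hcompl : (SimpleGraph.cycleGraph (2*p+1))ᶜ.induce (S : Set (Fin (2*p+1)))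
      = ((SimpleGraph.cycleGraph (2*p+1)).induce (S : Set (Fin (2*p+1))))ᶜ := by
    ext u v
    simp only [SimpleGraph.comap_adj, SimpleGraph.compl_adj, Function.Embedding.subtype_apply,
      ne_eq, Subtype.ext_iff]
  obtain ⟨N, key, hN⟩ := aux_main ((SimpleGraph.cycleGraph (2*p+1)).induce (S : Set (Fin (2*p+1))))
    (fun v => (v.1 - m).val)
    (by
      intro u v h
      have h' : u.1 - m = v.1 - m := Fin.ext h
      exact Subtype.ext (sub_left_injective h'))
    (by
      rintro ⟨u, hu⟩ ⟨v, hv⟩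
      have hum : u.val ≠ m.val := fun h => hm (Fin.ext h ▸ hu)
      have hvm : v.val ≠ m.val := fun h => hm (Fin.ext h ▸ hv)
      simp only [SimpleGraph.comap_adj, Function.Embedding.subtype_apply,
        SimpleGraph.cycleGraph_adj']
      have hs : ∀ x y : Fin (2*p+1), (x - y).val =
          if y.val ≤ x.val then x.val - y.val else 2*p+1 + x.val - y.val := by
        intro x y
        rw [Fin.sub_def]
        simp only
        split_ifs with h
        · rw [show 2*p+1 - y.val + x.val = (x.val - y.val) + (2*p+1) by omega,
            Nat.add_mod_right, Nat.mod_eq_of_lt (by omega)]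
        · rw [Nat.mod_eq_of_lt (by omega)]
          omega
      rw [hs, hs, hs, hs]
      have := u.isLt
      have := v.isLt
      have := m.isLt
      split_ifs <;> omega)
  have hcS : Fintype.card (S : Set (Fin (2*p+1))) = n := by simpa using hcard
  rw [hcS] at key
  rw [hcompl, SimpleGraph.cliqueNum_compl]
  obtain ⟨k, rfl⟩ := hno
  have hceil : ⌈((2 * k + 1 : ℕ) : ℚ) / 2⌉ = (k : ℤ) + 1 := by
    rw [Int.ceil_eq_iff]
    push_cast
    constructor <;> linarith
  rw [hceil]
  rw [hN]
  omega
end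

section
/- Let V ⊊ V(C_{2p+1}) and G = C̄_{2p+1}[V]. Suppose the graph C_{2p+1}[V] has two distinct connected components which are paths: one with vertices x_1, …, x_{2k} (in path order) and one with vertices w_1, …, w_s (in path order), where s = 2t is even. Then cl(G − {x_i, w_j}) = cl(G) for all i = 1, …, 2k and j = 1, …, s, and moreover cl(G − {x_{2k−2}, x_{2k−1}, w_j}) = cl(G) for all j = 1, …, s. -/
open SimpleGraph in
theorem aux_deg {p : ℕ} (hp : 1 ≤ p) (v u u' b : Fin (2*p+1))
    (h1 : (cycleGraph (2*p+1)).Adj v u) (h2 : (cycleGraph (2*p+1)).Adj v u')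
    (hne : u ≠ u') (h3 : (cycleGraph (2*p+1)).Adj v b) : b = u ∨ b = u' := by
  obtain ⟨q, rfl⟩ : ∃ q, p = q + 1 := ⟨p - 1, by omega⟩
  have key : ∀ c : Fin (2*(q+1)+1), (cycleGraph (2*(q+1)+1)).Adj v c → c = v - 1 ∨ c = v + 1 := by
    intro c hc
    have hc' : v - c = 1 ∨ c - v = 1 := (cycleGraph_adj (n := 2*q+1)).1 hc
    rcases hc' with h | h
    · left; rw [← h]; abel
    · right; rw [← h]; abel
  rcases key u h1 with e1 | e1 <;> rcases key u' h2 with e2 | e2 <;>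
    rcases key b h3 with e3 | e3 <;> subst e1 <;> simp_all

open SimpleGraph in
theorem aux_closed {p : ℕ} (X : Set (Fin (2*p+1))) (a : Fin (2*p+1)) (ha : a ∈ X)
    (hcl : ∀ u v, u ∈ X → (cycleGraph (2*p+1)).Adj u v → v ∈ X) (b : Fin (2*p+1)) : b ∈ X := by
  have hc : (cycleGraph (2*p+1)).Connected := cycleGraph_connected
  obtain ⟨W⟩ := hc.preconnected a b
  induction W with
  | nil => exact ha
  | cons h _ ih => exact ih (hcl _ _ ha h)

/-- non-consecutive vertices on the path are non-adjacent -/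
theorem aux_nonadj {p : ℕ} (hp : 1 ≤ p) (k : ℕ) (x : ℕ → Fin (2*p+1))
    (S : Set (Fin (2*p+1)))
    (hxinj : Set.InjOn x {i : ℕ | 1 ≤ i ∧ i ≤ 2*k})
    (hxadj : ∀ i : ℕ, 1 ≤ i → i + 1 ≤ 2*k →
      (SimpleGraph.cycleGraph (2*p+1)).Adj (x i) (x (i+1)))
    (z : Fin (2*p+1)) (hz : z ∉ x '' {i : ℕ | 1 ≤ i ∧ i ≤ 2*k})
    (a b : ℕ) (ha : 1 ≤ a) (hab : a + 2 ≤ b) (hb : b ≤ 2*k) :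
    ¬ (SimpleGraph.cycleGraph (2*p+1)).Adj (x a) (x b) := by
  have inj : ∀ i j, 1 ≤ i → i ≤ 2*k → 1 ≤ j → j ≤ 2*k → x i = x j → i = j :=
    fun i j h1 h2 h3 h4 h => hxinj ⟨h1, h2⟩ ⟨h3, h4⟩ h
  have internal : ∀ i, 2 ≤ i → i + 1 ≤ 2*k → ∀ c,
      (SimpleGraph.cycleGraph (2*p+1)).Adj (x i) c → c = x (i-1) ∨ c = x (i+1) := by
    intro i h1 h2 c hc
    have e := hxadj (i-1) (by omega) (by omega)
    rw [show i - 1 + 1 = i by omega] at e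
    refine aux_deg hp (x i) _ _ c e.symm (hxadj i (by omega) h2) ?_ hc
    intro h
    have := inj _ _ (by omega) (by omega) (by omega) (by omega) h
    omega
  intro h
  by_cases h1 : 2 ≤ a
  · rcases internal a h1 (by omega) _ h with e | e
    · have := inj _ _ (by omega) (by omega) (by omega) (by omega) e
      omega
    · have := inj _ _ (by omega) (by omega) (by omega) (by omega) e
      omega
  by_cases h2 : b + 1 ≤ 2*k
  · rcases internal b (by omega) h2 _ h.symm with e | e
    · have := inj _ _ (by omega) (by omega) (by omega) (by omega) e
      omega
    · have := inj _ _ (by omega) (by omega) (by omega) (by omega) e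
      omega
  obtain rfl : a = 1 := by omega
  obtain rfl : b = 2*k := by omega
  apply hz
  refine aux_closed (x '' {i : ℕ | 1 ≤ i ∧ i ≤ 2*k}) (x 1) ⟨1, ⟨le_rfl, by omega⟩, rfl⟩ ?_ z
  rintro _ v ⟨i, ⟨hi1, hi2⟩, rfl⟩ hv
  by_cases i1 : i = 1
  · subst i1
    have e := hxadj 1 le_rfl (by omega)
    rcases aux_deg hp (x 1) _ _ v e h (fun h => by
      have := inj _ _ (by omega) (by omega) (by omega) (by omega) h
      omega) hv with r | r
    · exact ⟨2, ⟨by omega, by omega⟩, r.symm⟩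
    · exact ⟨2*k, ⟨by omega, by omega⟩, r.symm⟩
  by_cases i2 : i = 2*k
  · subst i2
    have e := hxadj (2*k-1) (by omega) (by omega)
    rw [show 2*k - 1 + 1 = 2*k by omega] at e
    rcases aux_deg hp (x (2*k)) _ _ v e.symm h.symm (fun h => by
      have := inj _ _ (by omega) (by omega) (by omega) (by omega) h
      omega) hv with r | r
    · exact ⟨2*k-1, ⟨by omega, by omega⟩, r.symm⟩
    · exact ⟨1, ⟨by omega, by omega⟩, r.symm⟩
  rcases internal i (by omega) (by omega) v hv with r | r
  · exact ⟨i-1, ⟨by omega, by omega⟩, r.symm⟩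
  · exact ⟨i+1, ⟨by omega, by omega⟩, r.symm⟩

/-- exchange on one path component -/
theorem aux_exchange {p : ℕ} (hp : 1 ≤ p) (k : ℕ) (x : ℕ → Fin (2*p+1))
    (S : Finset (Fin (2*p+1)))
    (hxinj : Set.InjOn x {i : ℕ | 1 ≤ i ∧ i ≤ 2*k})
    (hxadj : ∀ i : ℕ, 1 ≤ i → i + 1 ≤ 2*k →
      (SimpleGraph.cycleGraph (2*p+1)).Adj (x i) (x (i+1)))
    (z : Fin (2*p+1)) (hz : z ∉ x '' {i : ℕ | 1 ≤ i ∧ i ≤ 2*k})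
    (hXS : ∀ i, 1 ≤ i → i ≤ 2*k → x i ∈ S)
    (hcl : ∀ i v, 1 ≤ i → i ≤ 2*k → v ∈ S → (SimpleGraph.cycleGraph (2*p+1)).Adj (x i) v →
      v ∈ x '' {i : ℕ | 1 ≤ i ∧ i ≤ 2*k})
    (f : ℕ → ℕ) (hf : ∀ m, m < k → 1 ≤ f m ∧ f m ≤ 2*k)
    (hf2 : ∀ m n, m < n → n < k → f m + 2 ≤ f n)
    (M : Finset (Fin (2*p+1))) (hMS : M ⊆ S)
    (hM : ∀ u ∈ M, ∀ v ∈ M, ¬ (SimpleGraph.cycleGraph (2*p+1)).Adj u v) :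
    ∃ M' : Finset (Fin (2*p+1)), M' ⊆ S ∧
      (∀ u ∈ M', ∀ v ∈ M', ¬ (SimpleGraph.cycleGraph (2*p+1)).Adj u v) ∧
      M.card ≤ M'.card ∧
      (∀ i, 1 ≤ i → i ≤ 2*k → x i ∈ M' → ∃ m < k, f m = i) ∧
      (∀ v, v ∈ M' → v ∉ x '' {i : ℕ | 1 ≤ i ∧ i ≤ 2*k} → v ∈ M) := by
  classical
  have inj : ∀ i j, 1 ≤ i → i ≤ 2*k → 1 ≤ j → j ≤ 2*k → x i = x j → i = j :=
    fun i j h1 h2 h3 h4 h => hxinj ⟨h1, h2⟩ ⟨h3, h4⟩ h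
  have non := aux_nonadj hp k x S hxinj hxadj z hz
  set X : Finset (Fin (2*p+1)) := (Finset.Icc 1 (2*k)).image x with hX
  have memX : ∀ v, v ∈ X ↔ v ∈ x '' {i : ℕ | 1 ≤ i ∧ i ≤ 2*k} := by
    intro v; simp [hX]
  set A : Finset (Fin (2*p+1)) := (Finset.range k).image (fun m => x (f m)) with hA
  have hAX : A ⊆ X := by
    intro v hv
    obtain ⟨m, hm, rfl⟩ := Finset.mem_image.1 hv
    have := hf m (Finset.mem_range.1 hm)
    exact (memX _).2 ⟨_, this, rfl⟩
  have hAcard : A.card = k := by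
    rw [hA, Finset.card_image_of_injOn, Finset.card_range]
    intro m hm n hn h
    have hm := Finset.mem_range.1 hm
    have hn := Finset.mem_range.1 hn
    have e := inj _ _ (hf m hm).1 (hf m hm).2 (hf n hn).1 (hf n hn).2 h
    rcases lt_trichotomy m n with l | l | l
    · have := hf2 m n l hn; omega
    · exact l
    · have := hf2 n m l hm; omega
  have hAind : ∀ u ∈ A, ∀ v ∈ A, ¬ (SimpleGraph.cycleGraph (2*p+1)).Adj u v := by
    intro u hu v hv h
    obtain ⟨m, hm, rfl⟩ := Finset.mem_image.1 hu
    obtain ⟨n, hn, rfl⟩ := Finset.mem_image.1 hv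
    have hm := Finset.mem_range.1 hm
    have hn := Finset.mem_range.1 hn
    rcases lt_trichotomy m n with l | l | l
    · exact non _ _ (hf m hm).1 (hf2 m n l hn) (hf n hn).2 h
    · subst l; exact h.ne rfl
    · exact non _ _ (hf n hn).1 (hf2 n m l hm) (hf m hm).2 h.symm
  have hMX : (M ∩ X).card ≤ k := by
    set I := (Finset.Icc 1 (2*k)).filter (fun i => x i ∈ M) with hI
    have h1 : M ∩ X ⊆ I.image x := by
      intro v hv
      obtain ⟨hv1, hv2⟩ := Finset.mem_inter.1 hv
      obtain ⟨i, hi, rfl⟩ := Finset.mem_image.1 hv2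
      exact Finset.mem_image.2 ⟨i, Finset.mem_filter.2 ⟨hi, hv1⟩, rfl⟩
    have h2 : I.card ≤ (Finset.range k).card := by
      apply Finset.card_le_card_of_injOn (fun i => (i-1)/2)
      · intro i hi
        obtain ⟨hi1, hi2⟩ := Finset.mem_filter.1 hi
        have := Finset.mem_Icc.1 hi1
        apply Finset.mem_coe.2
        apply Finset.mem_range.2
        show (i-1)/2 < k
        omega
      · intro i hi j hj hij
        obtain ⟨hi1, hi2⟩ := Finset.mem_filter.1 hi
        obtain ⟨hj1, hj2⟩ := Finset.mem_filter.1 hj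
        have hi1 := Finset.mem_Icc.1 hi1
        have hj1 := Finset.mem_Icc.1 hj1
        have hij : (i-1)/2 = (j-1)/2 := hij
        by_contra hne
        rcases (by omega : j = i+1 ∨ i = j+1) with e | e
        · subst e; exact hM _ hi2 _ hj2 (hxadj i hi1.1 hj1.2)
        · subst e; exact hM _ hj2 _ hi2 (hxadj j hj1.1 hi1.2)
    calc (M ∩ X).card ≤ (I.image x).card := Finset.card_le_card h1
      _ ≤ I.card := Finset.card_image_le
      _ ≤ k := by simpa using h2
  have hcross : ∀ u ∈ A, ∀ v ∈ M \ X, ¬ (SimpleGraph.cycleGraph (2*p+1)).Adj u v := by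
    intro u hu v hv h
    obtain ⟨m, hm, rfl⟩ := Finset.mem_image.1 hu
    obtain ⟨hv1, hv2⟩ := Finset.mem_sdiff.1 hv
    have := hf m (Finset.mem_range.1 hm)
    exact hv2 ((memX v).2 (hcl _ v this.1 this.2 (hMS hv1) h))
  refine ⟨(M \ X) ∪ A, ?_, ?_, ?_, ?_, ?_⟩
  · intro v hv
    rcases Finset.mem_union.1 hv with h | h
    · exact hMS (Finset.mem_sdiff.1 h).1
    · obtain ⟨i, hi, rfl⟩ := (memX _).1 (hAX h)
      exact hXS i hi.1 hi.2
  · intro u hu v hv h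
    rcases Finset.mem_union.1 hu with hu | hu <;> rcases Finset.mem_union.1 hv with hv | hv
    · exact hM u (Finset.mem_sdiff.1 hu).1 v (Finset.mem_sdiff.1 hv).1 h
    · exact hcross v hv u hu h.symm
    · exact hcross u hu v hv h
    · exact hAind u hu v hv h
  · rw [Finset.card_union_of_disjoint, hAcard]
    · have := Finset.card_sdiff_add_card_inter M X
      omega
    · exact Finset.disjoint_of_subset_right hAX Finset.sdiff_disjoint
  · intro i h1 h2 h
    rcases Finset.mem_union.1 h with h | h
    · exact absurd ((memX _).2 ⟨i, ⟨h1, h2⟩, rfl⟩) (Finset.mem_sdiff.1 h).2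
    · obtain ⟨m, hm, e⟩ := Finset.mem_image.1 h
      have hm := Finset.mem_range.1 hm
      exact ⟨m, hm, inj _ _ (hf m hm).1 (hf m hm).2 h1 h2 e⟩
  · intro v hv hn
    rcases Finset.mem_union.1 hv with h | h
    · exact (Finset.mem_sdiff.1 h).1
    · exact absurd ((memX _).1 (hAX h)) hn

theorem aux_clique {α : Type*} [Fintype α] (H : SimpleGraph α) (S : Finset α) :
    ∃ M : Finset α, M ⊆ S ∧ (∀ u ∈ M, ∀ v ∈ M, ¬ H.Adj u v) ∧
      M.card = (Hᶜ.induce (S : Set α)).cliqueNum := by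
  classical
  obtain ⟨s, hs⟩ := (Hᶜ.induce (S : Set α)).exists_isNClique_cliqueNum
  refine ⟨s.map (Function.Embedding.subtype _), ?_, ?_, ?_⟩
  · intro v hv
    obtain ⟨a, _, rfl⟩ := Finset.mem_map.1 hv
    exact a.2
  · intro u hu v hv h
    obtain ⟨a, ha, rfl⟩ := Finset.mem_map.1 hu
    obtain ⟨b, hb, rfl⟩ := Finset.mem_map.1 hv
    have hab : a ≠ b := by rintro rfl; exact h.ne rfl
    have := hs.1 ha hb hab
    exact this.2 h
  · rw [Finset.card_map]; exact hs.2

theorem aux_clique_le {α : Type*} [Fintype α] (H : SimpleGraph α) (T : Set α)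
    (M : Finset α) (hM : ∀ u ∈ M, u ∈ T) (hI : ∀ u ∈ M, ∀ v ∈ M, ¬ H.Adj u v) :
    M.card ≤ (Hᶜ.induce T).cliqueNum := by
  classical
  have h : (Hᶜ.induce T).IsClique (M.subtype (· ∈ T) : Finset T) := by
    intro a ha b hb hab
    have ha' := Finset.mem_subtype.1 ha
    have hb' := Finset.mem_subtype.1 hb
    exact ⟨fun h => hab (Subtype.ext h), hI _ ha' _ hb'⟩
  have h2 := h.card_le_cliqueNum
  rwa [Finset.card_subtype, Finset.filter_true_of_mem hM] at h2

theorem aux_comp {α : Type*} (H : SimpleGraph α) (S : Set α)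
    (c : (H.induce S).ConnectedComponent) (u v : α) (hu : u ∈ Subtype.val '' c.supp)
    (hv : v ∈ S) (h : H.Adj u v) : v ∈ Subtype.val '' c.supp := by
  obtain ⟨a, ha, rfl⟩ := hu
  refine ⟨⟨v, hv⟩, ?_, rfl⟩
  have hadj : (H.induce S).Adj a ⟨v, hv⟩ := h
  exact c.mem_supp_of_adj_mem_supp ha hadj

theorem aux_disj {α : Type*} (H : SimpleGraph α) (S : Set α)
    (c d : (H.induce S).ConnectedComponent) (hcd : c ≠ d) (u : α)
    (hu : u ∈ Subtype.val '' c.supp) (hv : u ∈ Subtype.val '' d.supp) : False := by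
  obtain ⟨a, ha, rfl⟩ := hu
  obtain ⟨b, hb, e⟩ := hv
  obtain rfl := Subtype.ext e
  exact hcd (ha.symm.trans hb)

/-- **Lemma 3(a).** Let `V ⊊ V(C_{2p+1})` and `G = C̄_{2p+1}[V]`.  Suppose `C_{2p+1}[V]`
has two distinct connected components which are the paths `x_1, …, x_{2k}` and
`w_1, …, w_s` (in path order, 1-based) where `s = 2t` is even.  Then
`cl(G - {x_i, w_j}) = cl(G)` for all `1 ≤ i ≤ 2k`, `1 ≤ j ≤ s`, and moreover (for `k ≥ 2`)
`cl(G - {x_{2k-2}, x_{2k-1}, w_j}) = cl(G)` for all `1 ≤ j ≤ s`. -/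
theorem cliqueNum_delete_two_components_even (p k t s : ℕ) (hp : 1 ≤ p) (hk : 1 ≤ k)
    (ht : 1 ≤ t) (hst : s = 2*t)
    (S : Finset (Fin (2*p+1))) (hS : S ≠ Finset.univ)
    (c₁ c₂ : ((SimpleGraph.cycleGraph (2*p+1)).induce
        (S : Set (Fin (2*p+1)))).ConnectedComponent) (hcc : c₁ ≠ c₂)
    (x w : ℕ → Fin (2*p+1))
    (hx : Subtype.val '' c₁.supp = x '' {i : ℕ | 1 ≤ i ∧ i ≤ 2*k})
    (hxinj : Set.InjOn x {i : ℕ | 1 ≤ i ∧ i ≤ 2*k})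
    (hxadj : ∀ i : ℕ, 1 ≤ i → i + 1 ≤ 2*k →
      (SimpleGraph.cycleGraph (2*p+1)).Adj (x i) (x (i+1)))
    (hw : Subtype.val '' c₂.supp = w '' {j : ℕ | 1 ≤ j ∧ j ≤ s})
    (hwinj : Set.InjOn w {j : ℕ | 1 ≤ j ∧ j ≤ s})
    (hwadj : ∀ j : ℕ, 1 ≤ j → j + 1 ≤ s →
      (SimpleGraph.cycleGraph (2*p+1)).Adj (w j) (w (j+1))) :
    (∀ i j : ℕ, 1 ≤ i → i ≤ 2*k → 1 ≤ j → j ≤ s →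
      ((SimpleGraph.cycleGraph (2*p+1))ᶜ.induce
          ((S \ {x i, w j}) : Set (Fin (2*p+1)))).cliqueNum
        = ((SimpleGraph.cycleGraph (2*p+1))ᶜ.induce (S : Set (Fin (2*p+1)))).cliqueNum)
    ∧ (2 ≤ k → ∀ j : ℕ, 1 ≤ j → j ≤ s →
      ((SimpleGraph.cycleGraph (2*p+1))ᶜ.induce
          ((S \ {x (2*k-2), x (2*k-1), w j}) : Set (Fin (2*p+1)))).cliqueNum
        = ((SimpleGraph.cycleGraph (2*p+1))ᶜ.induce (S : Set (Fin (2*p+1)))).cliqueNum) := by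
  subst hst
  have xmem : ∀ i, 1 ≤ i → i ≤ 2*k → x i ∈ x '' {i : ℕ | 1 ≤ i ∧ i ≤ 2*k} :=
    fun i h1 h2 => ⟨i, ⟨h1, h2⟩, rfl⟩
  have wmem : ∀ i, 1 ≤ i → i ≤ 2*t → w i ∈ w '' {i : ℕ | 1 ≤ i ∧ i ≤ 2*t} :=
    fun i h1 h2 => ⟨i, ⟨h1, h2⟩, rfl⟩
  have disj : ∀ v, v ∈ x '' {i : ℕ | 1 ≤ i ∧ i ≤ 2*k} →
      v ∈ w '' {i : ℕ | 1 ≤ i ∧ i ≤ 2*t} → False := by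
    intro v h1 h2
    rw [← hx] at h1
    rw [← hw] at h2
    exact aux_disj _ _ _ _ hcc v h1 h2
  have xS : ∀ i, 1 ≤ i → i ≤ 2*k → x i ∈ S := by
    intro i h1 h2
    have := xmem i h1 h2
    rw [← hx] at this
    obtain ⟨a, _, e⟩ := this
    rw [← e]; exact a.2
  have wS : ∀ i, 1 ≤ i → i ≤ 2*t → w i ∈ S := by
    intro i h1 h2
    have := wmem i h1 h2
    rw [← hw] at this
    obtain ⟨a, _, e⟩ := this
    rw [← e]; exact a.2
  have main : ∀ f : ℕ → ℕ, (∀ m, m < k → 1 ≤ f m ∧ f m ≤ 2*k) →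
      (∀ m n, m < n → n < k → f m + 2 ≤ f n) →
      ∀ j, 1 ≤ j → j ≤ 2*t → ∀ R : Set (Fin (2*p+1)),
      (∀ v ∈ R, v = w j ∨ ∃ i, 1 ≤ i ∧ i ≤ 2*k ∧ v = x i ∧ ∀ m, m < k → f m ≠ i) →
      ((SimpleGraph.cycleGraph (2*p+1))ᶜ.induce
          ((S \ R) : Set (Fin (2*p+1)))).cliqueNum
        = ((SimpleGraph.cycleGraph (2*p+1))ᶜ.induce (S : Set (Fin (2*p+1)))).cliqueNum := by
    intro f hf hf2 j hj1 hj2 R hR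
    apply le_antisymm
    · classical
      obtain ⟨M, hMS, hM, hc⟩ := aux_clique (SimpleGraph.cycleGraph (2*p+1))
        (Finset.univ.filter (· ∈ ((S : Set (Fin (2*p+1))) \ R)))
      have e : ((Finset.univ.filter (· ∈ ((S : Set (Fin (2*p+1))) \ R)) : Finset _) :
          Set (Fin (2*p+1))) = (S : Set (Fin (2*p+1))) \ R := by
        ext v; simp
      rw [e] at hc
      rw [← hc]
      apply aux_clique_le _ _ M _ hM
      intro u hu
      exact (Finset.mem_filter.1 (hMS hu)).2.1
    · obtain ⟨M, hMS, hM, hc⟩ := aux_clique (SimpleGraph.cycleGraph (2*p+1)) S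
      rw [← hc]
      obtain ⟨M1, hMS1, hM1, hc1, hx1, -⟩ := aux_exchange hp k x S hxinj hxadj (w 1)
        (fun h => disj _ h (wmem 1 le_rfl (by omega))) xS
        (fun i v h1 h2 hv h => by
          rw [← hx]
          exact aux_comp _ _ c₁ (x i) v (by rw [hx]; exact xmem i h1 h2) hv h)
        f hf hf2 M hMS hM
      obtain ⟨g, hg, hg2, hg3⟩ : ∃ g : ℕ → ℕ, (∀ m, m < t → 1 ≤ g m ∧ g m ≤ 2*t) ∧
          (∀ m n, m < n → n < t → g m + 2 ≤ g n) ∧ ∀ m, g m ≠ j := by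
        by_cases hj : j % 2 = 0
        · exact ⟨fun m => 2*m+1, fun m hm => by dsimp only; omega,
            fun m n _ _ => by dsimp only; omega, fun m => by dsimp only; omega⟩
        · exact ⟨fun m => 2*m+2, fun m hm => by dsimp only; omega,
            fun m n _ _ => by dsimp only; omega, fun m => by dsimp only; omega⟩
      obtain ⟨M2, hMS2, hM2, hc2, hx2, hx3⟩ := aux_exchange hp t w S hwinj hwadj (x 1)
        (fun h => disj _ (xmem 1 le_rfl (by omega)) h) wS
        (fun i v h1 h2 hv h => by
          rw [← hw]
          exact aux_comp _ _ c₂ (w i) v (by rw [hw]; exact wmem i h1 h2) hv h)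
        g hg hg2 M1 hMS1 hM1
      refine (hc1.trans hc2).trans (aux_clique_le _ _ M2 ?_ hM2)
      intro u hu
      refine ⟨hMS2 hu, fun hr => ?_⟩
      rcases hR u hr with rfl | ⟨i, h1, h2, rfl, h3⟩
      · obtain ⟨m, _, hm⟩ := hx2 j hj1 hj2 hu
        exact hg3 m hm
      · obtain ⟨m, hm, e⟩ := hx1 i h1 h2
          (hx3 _ hu (fun h => disj _ (xmem i h1 h2) h))
        exact h3 m hm e
  refine ⟨?_, ?_⟩
  · intro i j hi1 hi2 hj1 hj2
    obtain ⟨f, hf, hf2, hf3⟩ : ∃ g : ℕ → ℕ, (∀ m, m < k → 1 ≤ g m ∧ g m ≤ 2*k) ∧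
        (∀ m n, m < n → n < k → g m + 2 ≤ g n) ∧ ∀ m, g m ≠ i := by
      by_cases hj : i % 2 = 0
      · exact ⟨fun m => 2*m+1, fun m hm => by dsimp only; omega,
          fun m n _ _ => by dsimp only; omega, fun m => by dsimp only; omega⟩
      · exact ⟨fun m => 2*m+2, fun m hm => by dsimp only; omega,
          fun m n _ _ => by dsimp only; omega, fun m => by dsimp only; omega⟩
    apply main f hf hf2 j hj1 hj2
    rintro v (rfl | rfl)
    · exact Or.inr ⟨i, hi1, hi2, rfl, fun m _ => hf3 m⟩
    · exact Or.inl rfl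
  · intro hk2 j hj1 hj2
    apply main (fun m => if m + 1 = k then 2*k else 2*m+1) _ _ j hj1 hj2
    · rintro v (rfl | rfl | rfl)
      · refine Or.inr ⟨2*k-2, by omega, by omega, rfl, fun m hm => ?_⟩
        split_ifs <;> omega
      · refine Or.inr ⟨2*k-1, by omega, by omega, rfl, fun m hm => ?_⟩
        split_ifs <;> omega
      · exact Or.inl rfl
    · intro m hm
      split_ifs <;> omega
    · intro m n h1 h2
      split_ifs <;> omega
end

section
/- Let V ⊊ V(C_{2p+1}) and G = C̄_{2p+1}[V]. Suppose the graph C_{2p+1}[V] has two distinct connected components which are paths: one with vertices x_1, …, x_{2k} (in path order) and one with vertices w_1, …, w_s (in path order), where s = 2t + 1 is odd. Then cl(G − {x_{2k−2}, x_{2k−1}, w_{2i}}) = cl(G) for every i = 1, …, t. -/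
open SimpleGraph in
lemma aux_le {V : Type*} [Fintype V] (G : SimpleGraph V) (s : Set V) (A : Finset V)
    (hA : ∀ a ∈ A, a ∈ s) (hi : ∀ a ∈ A, ∀ b ∈ A, ¬ G.Adj a b) :
    A.card ≤ (Gᶜ.induce s).cliqueNum := by
  classical
  have hc : (Gᶜ.induce s).IsClique (A.subtype (· ∈ s) : Finset s) := by
    intro a ha b hb hab
    simp only [Finset.mem_coe, Finset.mem_subtype] at ha hb
    simp only [comap_adj, Function.Embedding.subtype_apply, compl_adj]
    exact ⟨fun h => hab (Subtype.ext h), hi _ ha _ hb⟩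
  have h := hc.card_le_cliqueNum
  rw [Finset.card_subtype, Finset.filter_true_of_mem hA] at h
  exact h

open SimpleGraph in
lemma aux_ex {V : Type*} [Fintype V] (G : SimpleGraph V) (s : Set V) :
    ∃ A : Finset V, (∀ a ∈ A, a ∈ s) ∧ (∀ a ∈ A, ∀ b ∈ A, ¬ G.Adj a b) ∧
    A.card = (Gᶜ.induce s).cliqueNum := by
  classical
  obtain ⟨B, hB⟩ := (Gᶜ.induce s).exists_isNClique_cliqueNum
  refine ⟨B.map (Function.Embedding.subtype _), ?_, ?_, ?_⟩
  · intro a ha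
    simp only [Finset.mem_map, Function.Embedding.subtype_apply] at ha
    obtain ⟨b, _, rfl⟩ := ha
    exact b.2
  · intro a ha b hb
    simp only [Finset.mem_map, Function.Embedding.subtype_apply] at ha hb
    obtain ⟨a, ha, rfl⟩ := ha
    obtain ⟨b, hb, rfl⟩ := hb
    intro hab
    have hne : a ≠ b := by rintro rfl; exact G.loopless.irrefl _ hab
    have := hB.isClique ha hb hne
    simp only [comap_adj, Function.Embedding.subtype_apply, compl_adj] at this
    exact this.2 hab
  · rw [Finset.card_map, hB.card_eq]

lemma aux_dir (N m : ℕ) (f : ℕ → ZMod N) (e : ZMod N) 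
    (hinj : Set.InjOn f {i : ℕ | 1 ≤ i ∧ i ≤ m}) (he : f 2 - f 1 = e) (he1 : e = 1 ∨ e = -1)
    (hadj : ∀ i, 1 ≤ i → i + 1 ≤ m → f (i+1) - f i = 1 ∨ f (i+1) - f i = -1) :
    ∀ i, i + 2 ≤ m → f (i+2) - f (i+1) = e := by
  intro i
  induction i with
  | zero => intro _; simpa using he
  | succ i ih =>
    intro hi
    have h1 := ih (by omega)
    have h2 := hadj (i+2) (by omega) (by omega)
    have hne : f (i+3) ≠ f (i+1) := fun h => by
      have := hinj (x₁ := i+3) (x₂ := i+1) ⟨by omega, by omega⟩ ⟨by omega, by omega⟩ h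
      omega
    change f (i+3) - f (i+2) = e
    change f (i+3) - f (i+2) = 1 ∨ f (i+3) - f (i+2) = -1 at h2
    by_contra hcon
    apply hne
    have : f (i+3) - f (i+2) = - e := by
      rcases he1 with rfl | rfl <;> rcases h2 with h2 | h2 <;> simp_all
    linear_combination this + h1

lemma aux_path (N m : ℕ) (f : ℕ → ZMod N) (hm : m < N)
    (hinj : Set.InjOn f {i : ℕ | 1 ≤ i ∧ i ≤ m})
    (hadj : ∀ i, 1 ≤ i → i + 1 ≤ m → f (i+1) - f i = 1 ∨ f (i+1) - f i = -1)
    (i j : ℕ) (hi : 1 ≤ i) (hij : i < j) (hj : j ≤ m) 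
    (h : f j - f i = 1 ∨ f j - f i = -1) : j = i + 1 := by
  obtain ⟨e, he⟩ : ∃ e, f 2 - f 1 = e := ⟨_, rfl⟩
  have he1 : e = 1 ∨ e = -1 := by rw [← he]; exact hadj 1 (by omega) (by omega)
  have hd := aux_dir N m f e hinj he he1 hadj
  have hs : ∀ d : ℕ, i + d ≤ m → f (i+d) - f i = e * d := by
    intro d
    induction d with
    | zero => simp
    | succ d ih =>
      intro h
      have h1 := ih (by omega)
      have h2 := hd (i + d - 1) (by omega)
      rw [show i + d - 1 + 2 = i + (d+1) by omega, show i + d - 1 + 1 = i + d by omega] at h2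
      push_cast
      linear_combination h1 + h2
  obtain ⟨d, rfl⟩ := Nat.exists_eq_add_of_lt hij
  have h3 := hs (d+1) (by omega)
  rw [← add_assoc] at h3
  rw [h3] at h
  have h4 : ((d : ℕ) : ZMod N) = 0 ∨ ((d + 2 : ℕ) : ZMod N) = 0 := by
    push_cast at h ⊢
    rcases he1 with rfl | rfl <;> rcases h with h | h
    · left; linear_combination h
    · right; linear_combination h
    · right; linear_combination -h
    · left; linear_combination -h
  rw [ZMod.natCast_eq_zero_iff, ZMod.natCast_eq_zero_iff] at h4
  rcases h4 with h4 | h4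
  · have := Nat.eq_zero_of_dvd_of_lt h4 (by omega)
    omega
  · have := Nat.eq_zero_of_dvd_of_lt h4 (by omega)
    omega

lemma aux_neg (N : ℕ) (a b : ZMod N) : a - b = 1 ↔ b - a = -1 := by
  constructor <;> intro h <;> linear_combination -h

open SimpleGraph in
lemma aux_cyc (p : ℕ) (hp : 1 ≤ p) (u v : Fin (2*p+1)) :
    (cycleGraph (2*p+1)).Adj u v ↔
      ((v : ZMod (2*p+1)) - (u : ZMod (2*p+1)) = 1 ∨
       (v : ZMod (2*p+1)) - (u : ZMod (2*p+1)) = -1) := by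
  obtain ⟨q, rfl⟩ := Nat.exists_eq_add_of_le' hp
  have h1 := @cycleGraph_adj (2*q+1) u v
  have h2 : (cycleGraph (2*(q+1)+1)).Adj u v ↔
      ((u : ZMod (2*(q+1)+1)) - (v : ZMod (2*(q+1)+1)) = 1 ∨
       (v : ZMod (2*(q+1)+1)) - (u : ZMod (2*(q+1)+1)) = 1) := h1
  rw [h2, or_comm]
  exact or_congr Iff.rfl (aux_neg (2*(q+1)+1) u v)

open SimpleGraph in
lemma aux_pathG (p m : ℕ) (hp : 1 ≤ p) (f : ℕ → Fin (2*p+1)) (hm : m < 2*p+1)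
    (hinj : Set.InjOn f {i : ℕ | 1 ≤ i ∧ i ≤ m})
    (hadj : ∀ i, 1 ≤ i → i + 1 ≤ m → (cycleGraph (2*p+1)).Adj (f i) (f (i+1)))
    (i j : ℕ) (hi : 1 ≤ i) (hi' : i ≤ m) (hj : 1 ≤ j) (hj' : j ≤ m)
    (h : (cycleGraph (2*p+1)).Adj (f i) (f j)) : j = i + 1 ∨ i = j + 1 := by
  have H := aux_path (2*p+1) m f hm hinj
    (fun i h1 h2 => (aux_cyc p hp _ _).1 (hadj i h1 h2))
  rcases lt_trichotomy i j with hl | rfl | hl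
  · exact Or.inl (H i j hi hl hj' ((aux_cyc p hp _ _).1 h))
  · exact absurd h ((cycleGraph (2*p+1)).loopless.irrefl _)
  · exact Or.inr (H j i hj hl hi' ((aux_cyc p hp _ _).1 h.symm))

/-- An independent set contains at most half of a path (rounded up). -/
lemma aux_card {V : Type*} [DecidableEq V] (G : SimpleGraph V) (f : ℕ → V) (m r : ℕ)
    (hmr : m ≤ 2 * r)
    (hadj : ∀ i, 1 ≤ i → i + 1 ≤ m → G.Adj (f i) (f (i+1))) (A : Finset V)
    (hA : ∀ a ∈ A, ∀ b ∈ A, ¬ G.Adj a b) :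
    (A ∩ (Finset.Icc 1 m).image f).card ≤ r := by
  have h1 : A ∩ (Finset.Icc 1 m).image f ⊆ ((Finset.Icc 1 m).filter (fun i => f i ∈ A)).image f := by
    intro a ha
    simp only [Finset.mem_inter, Finset.mem_image, Finset.mem_filter] at ha ⊢
    obtain ⟨h, i, hi, rfl⟩ := ha
    exact ⟨i, ⟨hi, h⟩, rfl⟩
  refine (Finset.card_le_card h1).trans (Finset.card_image_le.trans ?_)
  have h2 : ((Finset.Icc 1 m).filter (fun i => f i ∈ A)).card ≤ (Finset.Icc 1 r).card := by
    apply Finset.card_le_card_of_injOn (fun i => (i+1)/2)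
    · intro i hi
      simp at hi ⊢
      omega
    · intro i hi j hj hij
      simp at hi hj hij
      by_contra hne
      rcases lt_or_gt_of_ne hne with hl | hl
      · have : j = i + 1 := by omega
        subst this
        exact hA _ hi.2 _ hj.2 (hadj i (by omega) (by omega))
      · have : i = j + 1 := by omega
        subst this
        exact hA _ hj.2 _ hi.2 (hadj j (by omega) (by omega))
  simpa using h2

lemma aux_repl {V : Type*} [DecidableEq V] (G : SimpleGraph V) (S A C X : Finset V)
    (hAS : A ⊆ S) (hA : ∀ a ∈ A, ∀ b ∈ A, ¬ G.Adj a b)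
    (hCS : C ⊆ S) (hC : ∀ a ∈ C, ∀ b ∈ S, G.Adj a b → b ∈ C)
    (hXC : X ⊆ C) (hX : ∀ a ∈ X, ∀ b ∈ X, ¬ G.Adj a b)
    (hcard : (A ∩ C).card ≤ X.card) :
    (A \ C ∪ X) ⊆ S ∧ (∀ a ∈ A \ C ∪ X, ∀ b ∈ A \ C ∪ X, ¬ G.Adj a b) ∧
    A.card ≤ (A \ C ∪ X).card := by
  refine ⟨?_, ?_, ?_⟩
  · intro a ha
    simp only [Finset.mem_union, Finset.mem_sdiff] at ha
    rcases ha with ha | ha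
    · exact hAS ha.1
    · exact hCS (hXC ha)
  · intro a ha b hb hab
    simp only [Finset.mem_union, Finset.mem_sdiff] at ha hb
    rcases ha with ha | ha <;> rcases hb with hb | hb
    · exact hA a ha.1 b hb.1 hab
    · exact ha.2 (hC b (hXC hb) a (hAS ha.1) hab.symm)
    · exact hb.2 (hC a (hXC ha) b (hAS hb.1) hab)
    · exact hX a ha b hb hab
  · rw [Finset.card_union_of_disjoint]
    · have := Finset.card_sdiff_add_card_inter A C
      omega
    · rw [Finset.disjoint_left]
      intro a ha hx
      exact (Finset.mem_sdiff.1 ha).2 (hXC hx)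

open SimpleGraph in
lemma aux_comp_s16 {V : Type*} (G : SimpleGraph V) (S : Set V) (c : (G.induce S).ConnectedComponent)
    (T : Set V) (hT : Subtype.val '' c.supp = T) :
    T ⊆ S ∧ ∀ a ∈ T, ∀ b ∈ S, G.Adj a b → b ∈ T := by
  subst hT
  refine ⟨?_, ?_⟩
  · rintro _ ⟨a, _, rfl⟩; exact a.2
  · rintro _ ⟨a, ha, rfl⟩ b hb hab
    refine ⟨⟨b, hb⟩, ?_, rfl⟩
    rw [ConnectedComponent.mem_supp_iff] at ha ⊢
    rw [← ha, ConnectedComponent.eq]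
    have : (G.induce S).Adj a ⟨b, hb⟩ := hab
    exact this.symm.reachable


/-- **Lemma 3(b).** Let `V ⊊ V(C_{2p+1})` and `G = C̄_{2p+1}[V]`.  Suppose `C_{2p+1}[V]`
has two distinct connected components which are the paths `x_1, …, x_{2k}` (with `k ≥ 2`)
and `w_1, …, w_s` (in path order, 1-based) where `s = 2t + 1` is odd.  Then
`cl(G - {x_{2k-2}, x_{2k-1}, w_{2i}}) = cl(G)` for every `i = 1, …, t`. -/
theorem cliqueNum_delete_two_components_odd (p k t s : ℕ) (hp : 1 ≤ p) (hk : 2 ≤ k)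
    (hst : s = 2*t + 1)
    (S : Finset (Fin (2*p+1))) (hS : S ≠ Finset.univ)
    (c₁ c₂ : ((SimpleGraph.cycleGraph (2*p+1)).induce
        (S : Set (Fin (2*p+1)))).ConnectedComponent) (hcc : c₁ ≠ c₂)
    (x w : ℕ → Fin (2*p+1))
    (hx : Subtype.val '' c₁.supp = x '' {i : ℕ | 1 ≤ i ∧ i ≤ 2*k})
    (hxinj : Set.InjOn x {i : ℕ | 1 ≤ i ∧ i ≤ 2*k})
    (hxadj : ∀ i : ℕ, 1 ≤ i → i + 1 ≤ 2*k →
      (SimpleGraph.cycleGraph (2*p+1)).Adj (x i) (x (i+1)))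
    (hw : Subtype.val '' c₂.supp = w '' {j : ℕ | 1 ≤ j ∧ j ≤ s})
    (hwinj : Set.InjOn w {j : ℕ | 1 ≤ j ∧ j ≤ s})
    (hwadj : ∀ j : ℕ, 1 ≤ j → j + 1 ≤ s →
      (SimpleGraph.cycleGraph (2*p+1)).Adj (w j) (w (j+1))) :
    ∀ i : ℕ, 1 ≤ i → i ≤ t →
      ((SimpleGraph.cycleGraph (2*p+1))ᶜ.induce
          ((S \ {x (2*k-2), x (2*k-1), w (2*i)}) : Set (Fin (2*p+1)))).cliqueNum
        = ((SimpleGraph.cycleGraph (2*p+1))ᶜ.induce (S : Set (Fin (2*p+1)))).cliqueNum := by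

  intro i hi hit
  obtain ⟨A, hAS, hA, hAc⟩ := aux_ex (SimpleGraph.cycleGraph (2*p+1)) (S : Set (Fin (2*p+1)))
  have hAS' : A ⊆ S := fun a ha => by simpa using hAS a ha
  obtain ⟨h1S, h1c⟩ := aux_comp_s16 _ _ c₁ _ hx
  obtain ⟨h2S, h2c⟩ := aux_comp_s16 _ _ c₂ _ hw
  have hne : ∀ a b, 1 ≤ a → a ≤ 2*k → 1 ≤ b → b ≤ s → x a ≠ w b := by
    intro a b ha ha' hb hb' hab
    have m1 : x a ∈ Subtype.val '' c₁.supp := hx ▸ ⟨a, ⟨ha, ha'⟩, rfl⟩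
    have m2 : w b ∈ Subtype.val '' c₂.supp := hw ▸ ⟨b, ⟨hb, hb'⟩, rfl⟩
    obtain ⟨u, hu, hu'⟩ := m1
    obtain ⟨v, hv, hv'⟩ := m2
    have : u = v := Subtype.ext (by rw [hu', hv', hab])
    subst this
    rw [SimpleGraph.ConnectedComponent.mem_supp_iff] at hu hv
    exact hcc (hu.symm.trans hv)
  set C1 := (Finset.Icc 1 (2*k)).image x with hC1
  set C2 := (Finset.Icc 1 s).image w with hC2
  have e1 : ∀ a, a ∈ C1 ↔ a ∈ x '' {i : ℕ | 1 ≤ i ∧ i ≤ 2*k} := by intro a; simp [hC1]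
  have e2 : ∀ a, a ∈ C2 ↔ a ∈ w '' {i : ℕ | 1 ≤ i ∧ i ≤ s} := by intro a; simp [hC2]
  have hdisj : Disjoint C1 C2 := by
    rw [Finset.disjoint_left]
    intro a ha hb
    obtain ⟨a, ha1, rfl⟩ := (e1 _).1 ha
    obtain ⟨b, hb1, hab⟩ := (e2 _).1 hb
    exact hne a b ha1.1 ha1.2 hb1.1 hb1.2 hab.symm
  have c1 : C1.card = 2*k := by
    rw [hC1, Finset.card_image_of_injOn]
    · simp
    · intro a ha b hb; exact hxinj (by simpa using ha) (by simpa using hb)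
  have c2 : C2.card = s := by
    rw [hC2, Finset.card_image_of_injOn]
    · simp
    · intro a ha b hb; exact hwinj (by simpa using ha) (by simpa using hb)
  have hsum : 2*k + s ≤ 2*p+1 := by
    have := Finset.card_le_univ (C1 ∪ C2)
    rw [Finset.card_union_of_disjoint hdisj, c1, c2, Fintype.card_fin] at this
    exact this
  have px := aux_pathG p (2*k) hp x (by omega) hxinj hxadj
  have pw := aux_pathG p s hp w (by omega) hwinj hwadj
  -- the replacement sets
  set g : ℕ → ℕ := fun a => if a < k then 2*a-1 else 2*k with hg
  have hg1 : ∀ a, 1 ≤ a → a ≤ k → 1 ≤ g a ∧ g a ≤ 2*k ∧ g a ≠ 2*k-2 ∧ g a ≠ 2*k-1 := by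
    intro a _ _; simp only [hg]; split_ifs <;> omega
  have hg2 : ∀ a b, 1 ≤ a → a ≤ k → 1 ≤ b → b ≤ k → g a = g b → a = b := by
    intro a b _ _ _ _; simp only [hg]; split_ifs <;> omega
  have hg3 : ∀ a b, 1 ≤ a → a ≤ k → 1 ≤ b → b ≤ k → g b ≠ g a + 1 := by
    intro a b _ _ _ _; simp only [hg]; split_ifs <;> omega
  set X := (Finset.Icc 1 k).image (fun a => x (g a)) with hX
  set W := (Finset.Icc 1 (t+1)).image (fun a => w (2*a-1)) with hW
  have hXm : ∀ u ∈ X, ∃ a, 1 ≤ a ∧ a ≤ k ∧ x (g a) = u := by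
    intro u hu
    simpa [hX, and_assoc] using hu
  have hWm : ∀ u ∈ W, ∃ a, 1 ≤ a ∧ a ≤ t+1 ∧ w (2*a-1) = u := by
    intro u hu
    simpa [hW, and_assoc] using hu
  have hXC : X ⊆ C1 := by
    intro u hu
    obtain ⟨a, h1, h2, rfl⟩ := hXm u hu
    exact (e1 _).2 ⟨g a, ⟨(hg1 a h1 h2).1, (hg1 a h1 h2).2.1⟩, rfl⟩
  have hWC : W ⊆ C2 := by
    intro u hu
    obtain ⟨a, h1, h2, rfl⟩ := hWm u hu
    exact (e2 _).2 ⟨2*a-1, ⟨by omega, by omega⟩, rfl⟩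
  have hXcard : X.card = k := by
    rw [hX, Finset.card_image_of_injOn]
    · simp
    · intro a ha b hb hab
      simp only [Finset.coe_Icc, Set.mem_Icc] at ha hb
      have ga := hg1 a ha.1 ha.2
      have gb := hg1 b hb.1 hb.2
      exact hg2 a b ha.1 ha.2 hb.1 hb.2 (hxinj ⟨ga.1, ga.2.1⟩ ⟨gb.1, gb.2.1⟩ hab)
  have hWcard : W.card = t+1 := by
    rw [hW, Finset.card_image_of_injOn]
    · simp
    · intro a ha b hb hab
      simp only [Finset.coe_Icc, Set.mem_Icc] at ha hb
      have := hwinj (x₁ := 2*a-1) (x₂ := 2*b-1) ⟨by omega, by omega⟩ ⟨by omega, by omega⟩ hab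
      omega
  have hXi : ∀ a ∈ X, ∀ b ∈ X, ¬ (SimpleGraph.cycleGraph (2*p+1)).Adj a b := by
    intro u hu v hv huv
    obtain ⟨a, h1, h2, rfl⟩ := hXm u hu
    obtain ⟨b, h3, h4, rfl⟩ := hXm v hv
    have ga := hg1 a h1 h2
    have gb := hg1 b h3 h4
    rcases px _ _ ga.1 ga.2.1 gb.1 gb.2.1 huv with h | h
    · exact hg3 a b h1 h2 h3 h4 h
    · exact hg3 b a h3 h4 h1 h2 h
  have hWi : ∀ a ∈ W, ∀ b ∈ W, ¬ (SimpleGraph.cycleGraph (2*p+1)).Adj a b := by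
    intro u hu v hv huv
    obtain ⟨a, h1, h2, rfl⟩ := hWm u hu
    obtain ⟨b, h3, h4, rfl⟩ := hWm v hv
    have := pw _ _ (by omega) (by omega) (by omega) (by omega) huv
    omega
  obtain ⟨r1, r2, r3⟩ := aux_repl _ S A C1 X hAS' hA
    (fun a ha => by simpa using h1S ((e1 _).1 ha))
    (fun a ha b hb hab => (e1 _).2 (h1c a ((e1 _).1 ha) b (by simpa using hb) hab))
    hXC hXi (by rw [hXcard]; exact aux_card _ x (2*k) k le_rfl hxadj A hA)
  obtain ⟨q1, q2, q3⟩ := aux_repl _ S _ C2 W r1 r2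
    (fun a ha => by simpa using h2S ((e2 _).1 ha))
    (fun a ha b hb hab => (e2 _).2 (h2c a ((e2 _).1 ha) b (by simpa using hb) hab))
    hWC hWi (by rw [hWcard]; exact aux_card _ w s (t+1) (by omega) hwadj _ r2)
  set B := (A \ C1 ∪ X) \ C2 ∪ W with hB
  have hxB : ∀ j, 1 ≤ j → j ≤ 2*k → (j = 2*k-2 ∨ j = 2*k-1) → x j ∉ B := by
    intro j hj hj' hjj hm
    have hin : x j ∈ C1 := (e1 _).2 ⟨j, ⟨hj, hj'⟩, rfl⟩
    simp only [hB, Finset.mem_union, Finset.mem_sdiff] at hm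
    rcases hm with ⟨hm | hm, _⟩ | hm
    · exact hm.2 hin
    · obtain ⟨a, h1, h2, h3⟩ := hXm _ hm
      have ga := hg1 a h1 h2
      have := hxinj (x₁ := g a) (x₂ := j) ⟨ga.1, ga.2.1⟩ ⟨hj, hj'⟩ h3
      omega
    · exact Finset.disjoint_left.1 hdisj hin (hWC hm)
  have hwB : w (2*i) ∉ B := by
    intro hm
    have hin : w (2*i) ∈ C2 := (e2 _).2 ⟨2*i, ⟨by omega, by omega⟩, rfl⟩
    simp only [hB, Finset.mem_union, Finset.mem_sdiff] at hm
    rcases hm with ⟨_, hm⟩ | hm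
    · exact hm hin
    · obtain ⟨a, h1, h2, h3⟩ := hWm _ hm
      have := hwinj (x₁ := 2*a-1) (x₂ := 2*i) ⟨by omega, by omega⟩ ⟨by omega, by omega⟩ h3
      omega
  apply le_antisymm
  · obtain ⟨D, hDS, hD, hDc⟩ := aux_ex (SimpleGraph.cycleGraph (2*p+1))
      ((S \ {x (2*k-2), x (2*k-1), w (2*i)}) : Set (Fin (2*p+1)))
    rw [← hDc]
    exact aux_le _ _ D (fun a ha => (hDS a ha).1) hD
  · rw [← hAc]
    refine (r3.trans q3).trans (aux_le _ _ B ?_ q2)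
    intro a ha
    refine ⟨by simpa using q1 ha, ?_⟩
    rintro (rfl | rfl | rfl)
    · exact hxB _ (by omega) (by omega) (Or.inl rfl) ha
    · exact hxB _ (by omega) (by omega) (Or.inr rfl) ha
    · exact hwB ha
end
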